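/- Weighted C² bound for eigenfunctions of the linearized operator: let λ ∈ ℝ and let ξ: ℝⁿ → (n×n skew-symmetric real matrices)ⁿ be a smooth map satisfying −Lξ = λξ pointwise and ∫_{ℝⁿ} (‖ξ(y)‖_F² + Σ_{i,j} ‖∂_i ξ_j(y)‖_F²)·e^{−|y|²/4} dy < ∞. Then for every α ∈ (0,1) there exists a constant C (depending on ξ, λ, α, n) such that for all y ∈ ℝⁿ, with r̃(y) = max(1, |y|): ‖ξ(y)‖_F ≤ C·r̃(y)^{2λ−1}, ‖∇ξ(y)‖ ≤ C·r̃(y)^{2λ−2}, ‖∇²ξ(y)‖ ≤ C·r̃(y)^{2λ−3}, and moreover the α-Hölder seminorm of ∇²ξ on the unit ball around y is at most C·r̃(y)^{2λ−3−α}. -/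

import Mathlib

open scoped BigOperators

noncomputable section

/-- Euclidean space `ℝⁿ`. -/
abbrev En (n : ℕ) := EuclideanSpace ℝ (Fin n)

/-- `n × n` real matrices, represented entrywise. -/
abbrev Mat (n : ℕ) := Fin n → Fin n → ℝ

variable {n : ℕ}

/-- Frobenius inner product `⟨A,B⟩_F = tr(AᵀB) = Σ_{μν} A_{μν} B_{μν}`. -/
def fipE (A B : Mat n) : ℝ := ∑ μ, ∑ ν, A μ ν * B μ ν

/-- Frobenius norm. -/
def fnormE (A : Mat n) : ℝ := Real.sqrt (fipE A A)

/-- Matrix commutator `[A, B] = AB − BA`, entrywise. -/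
def brkt (A B : Mat n) : Mat n := fun μ ν => ∑ k, (A μ k * B k ν - B μ k * A k ν)

/-- `A` is skew-symmetric. -/
def skewM (A : Mat n) : Prop := ∀ μ ν, A ν μ = -A μ ν

/-- Partial derivative `∂_i f` of a scalar function on `ℝⁿ`. -/
def pder (i : Fin n) (f : En n → ℝ) (y : En n) : ℝ :=
  fderiv ℝ f y (EuclideanSpace.single i 1)

/-- Euclidean Laplacian `Δf = Σ_i ∂_i ∂_i f` of a scalar function on `ℝⁿ`. -/
def lapS (f : En n → ℝ) (y : En n) : ℝ := ∑ i, pder i (fun z => pder i f z) y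

/-- Componentwise partial derivative `∂_i u` of a matrix-valued function on `ℝⁿ`. -/
def pderM (i : Fin n) (u : En n → Mat n) (y : En n) : Mat n :=
  fun μ ν => pder i (fun z => u z μ ν) y

/-- Componentwise Laplacian `Δu` of a matrix-valued function on `ℝⁿ`. -/
def lapM (u : En n → Mat n) (y : En n) : Mat n := fun μ ν => lapS (fun z => u z μ ν) y

/-- The constant `a = √(n−2)/(2√2)`. -/
def aC (n : ℕ) : ℝ := Real.sqrt ((n : ℝ) - 2) / (2 * Real.sqrt 2)

/-- The constant `b = (1/2)(6n − 12 − (n+2)√(2n−4))`. -/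
def bC (n : ℕ) : ℝ := (1 / 2) * (6 * (n : ℝ) - 12 - ((n : ℝ) + 2) * Real.sqrt (2 * (n : ℝ) - 4))

/-- `σ_i(y)`, the skew matrix with entries `(σ_i(y))^μ_ν = δ_{iν} y^μ − δ_{iμ} y^ν`. -/
def sigmaM (i : Fin n) (y : En n) : Mat n :=
  fun μ ν => (if i = ν then y μ else 0) - (if i = μ then y ν else 0)

/-- The soliton connection `W_i(y) = σ_i(y)/(a|y|² + b)`. -/
def Wc (i : Fin n) (y : En n) : Mat n :=
  fun μ ν => sigmaM i y μ ν / (aC n * ‖y‖ ^ 2 + bC n)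

/-- The curvature `F_{ij} = ∂_i W_j − ∂_j W_i + [W_i, W_j]` of the soliton connection `W`. -/
def Fc (i j : Fin n) (y : En n) : Mat n :=
  pderM i (Wc j) y - pderM j (Wc i) y + brkt (Wc i y) (Wc j y)

/-- The linearized operator `L` of the rescaled Yang–Mills de Turck flow at the soliton `W`:
`(Lu)_j = Δu_j − (1/2)Σ_i y_i ∂_i u_j − (1/2)u_j + 2Σ_i [W_i, ∂_i u_j]
  + Σ_i [W_i, [W_i, u_j]] + 2Σ_i [u_i, F_{ij}]`. -/
def Lop (u : En n → Fin n → Mat n) (y : En n) (j : Fin n) : Mat n :=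
  lapM (fun z => u z j) y
    - (1 / 2 : ℝ) • (∑ i, y i • pderM i (fun z => u z j) y)
    - (1 / 2 : ℝ) • u y j
    + (2 : ℝ) • ∑ i, brkt (Wc i y) (pderM i (fun z => u z j) y)
    + ∑ i, brkt (Wc i y) (brkt (Wc i y) (u y j))
    + (2 : ℝ) • ∑ i, brkt (u y i) (Fc i j y)

/-- Squared Frobenius norm of a tuple of matrices: `‖u‖_F² = Σ_j ‖u_j‖_F²`. -/
def tnormSq (v : Fin n → Mat n) : ℝ := ∑ j, fipE (v j) (v j)

/-- The Gaussian weight `ρ(y) = e^{−|y|²/4}`. -/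
def gauss (y : En n) : ℝ := Real.exp (-‖y‖ ^ 2 / 4)

end


namespace EW

open scoped ContDiff

/-- Smooth scalar functions. -/
abbrev Sm {n : ℕ} (f : En n → ℝ) : Prop := ContDiff ℝ (⊤ : ℕ∞) f

section calculus
variable {n : ℕ} {f g : En n → ℝ}

theorem Sm.dat (hf : Sm f) (y : En n) : DifferentiableAt ℝ f y :=
  (hf.differentiable (by simp)) y

theorem Sm.pder (hf : Sm f) (i : Fin n) : Sm (fun y => pder i f y) := by
  have h : ContDiff ℝ (⊤ : ℕ∞) (fderiv ℝ f) := hf.fderiv_right (by simp)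
  exact h.clm_apply contDiff_const

theorem Sm.lapS (hf : Sm f) : Sm (fun y => lapS f y) := by
  unfold _root_.lapS
  exact ContDiff.sum fun i _ => (hf.pder i).pder i

theorem Sm.cst (c : ℝ) : Sm (fun _ : En n => c) := contDiff_const

theorem Sm.coord (i : Fin n) : Sm (fun y : En n => y i) := by
  have : (fun y : En n => y i) = fun y => (EuclideanSpace.proj i : En n →L[ℝ] ℝ) y := by
    ext y; simp
  rw [this]
  exact (EuclideanSpace.proj i : En n →L[ℝ] ℝ).contDiff

theorem Sm.nsq : Sm (fun y : En n => ‖y‖ ^ 2) := contDiff_norm_sq ℝ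

theorem Sm.sumf {ι : Type*} [Fintype ι] {u : ι → En n → ℝ} (hu : ∀ a, Sm (u a)) :
    Sm (fun y => ∑ a, u a y) := ContDiff.sum fun a _ => hu a

theorem pder_cst (i : Fin n) (c : ℝ) (y : En n) : pder i (fun _ => c) y = 0 := by
  simp [pder]

theorem pder_coord (i j : Fin n) (y : En n) :
    pder i (fun y => y j) y = if j = i then 1 else 0 := by
  have : (fun y : En n => y j) = fun y => (EuclideanSpace.proj j : En n →L[ℝ] ℝ) y := by
    ext y; simp
  unfold pder
  rw [this, ContinuousLinearMap.fderiv]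
  simp

theorem pder_add (hf : Sm f) (hg : Sm g) (i : Fin n) (y : En n) :
    pder i (fun z => f z + g z) y = pder i f y + pder i g y := by
  unfold pder
  rw [fderiv_fun_add (hf.dat y) (hg.dat y)]; rfl

theorem pder_sub (hf : Sm f) (hg : Sm g) (i : Fin n) (y : En n) :
    pder i (fun z => f z - g z) y = pder i f y - pder i g y := by
  unfold pder
  rw [fderiv_fun_sub (hf.dat y) (hg.dat y)]; rfl

theorem pder_mul (hf : Sm f) (hg : Sm g) (i : Fin n) (y : En n) :
    pder i (fun z => f z * g z) y = pder i f y * g y + f y * pder i g y := by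
  unfold pder
  rw [fderiv_fun_mul (hf.dat y) (hg.dat y)]
  simp; ring

theorem pder_cmul (hf : Sm f) (c : ℝ) (i : Fin n) (y : En n) :
    pder i (fun z => c * f z) y = c * pder i f y := by
  rw [pder_mul (Sm.cst c) hf, pder_cst]; ring

theorem pder_sum {ι : Type*} [Fintype ι] {u : ι → En n → ℝ} (hu : ∀ a, Sm (u a))
    (i : Fin n) (y : En n) :
    pder i (fun z => ∑ a, u a z) y = ∑ a, pder i (u a) y := by
  unfold pder
  rw [fderiv_fun_sum (fun a _ => (hu a).dat y)]
  simp

theorem pder_comp (hf : Sm f) {φ : ℝ → ℝ} {φ' : ℝ} (i : Fin n) (y : En n)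
    (h : HasDerivAt φ φ' (f y)) :
    pder i (fun z => φ (f z)) y = φ' * pder i f y := by
  unfold pder
  have := (h.comp_hasFDerivAt y (hf.dat y).hasFDerivAt).fderiv
  simp only [Function.comp_def] at this
  rw [this]; simp

theorem pder_comm (hf : Sm f) (i j : Fin n) (y : En n) :
    pder i (fun z => pder j f z) y = pder j (fun z => pder i f z) y := by
  have h : ContDiff ℝ (⊤ : ℕ∞) (fderiv ℝ f) := hf.fderiv_right (by simp)
  have hd : DifferentiableAt ℝ (fderiv ℝ f) y := h.differentiable (by simp) y
  have hs : IsSymmSndFDerivAt ℝ f y := hf.contDiffAt.isSymmSndFDerivAt (by simp; norm_cast)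
  have key : ∀ v w : En n, fderiv ℝ (fun z => fderiv ℝ f z v) y w = fderiv ℝ (fderiv ℝ f) y w v := by
    intro v w
    rw [fderiv_clm_apply hd (by fun_prop)]
    simp
  unfold pder
  rw [key, key]
  exact hs _ _

theorem lapS_add (hf : Sm f) (hg : Sm g) (y : En n) :
    lapS (fun z => f z + g z) y = lapS f y + lapS g y := by
  unfold lapS
  rw [← Finset.sum_add_distrib]
  refine Finset.sum_congr rfl fun i _ => ?_
  simp only [pder_add hf hg]
  rw [pder_add (hf.pder i) (hg.pder i)]

theorem lapS_sub (hf : Sm f) (hg : Sm g) (y : En n) :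
    lapS (fun z => f z - g z) y = lapS f y - lapS g y := by
  unfold lapS
  rw [← Finset.sum_sub_distrib]
  refine Finset.sum_congr rfl fun i _ => ?_
  simp only [pder_sub hf hg]
  rw [pder_sub (hf.pder i) (hg.pder i)]

theorem lapS_mul (hf : Sm f) (hg : Sm g) (y : En n) :
    lapS (fun z => f z * g z) y
      = lapS f y * g y + 2 * (∑ i, pder i f y * pder i g y) + f y * lapS g y := by
  unfold lapS
  rw [Finset.sum_mul, Finset.mul_sum, Finset.mul_sum, ← Finset.sum_add_distrib,
    ← Finset.sum_add_distrib]
  refine Finset.sum_congr rfl fun i _ => ?_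
  simp only [pder_mul hf hg]
  rw [pder_add ((hf.pder i).mul hg) (hf.mul (hg.pder i)), pder_mul (hf.pder i) hg,
    pder_mul hf (hg.pder i)]
  ring

theorem lapS_cst (c : ℝ) (y : En n) : lapS (fun _ => c) y = 0 := by
  simp [lapS, pder_cst]

theorem lapS_cmul (hf : Sm f) (c : ℝ) (y : En n) :
    lapS (fun z => c * f z) y = c * lapS f y := by
  rw [lapS_mul (Sm.cst c) hf, lapS_cst]; simp [pder_cst]

theorem lapS_sum {ι : Type*} [Fintype ι] {u : ι → En n → ℝ} (hu : ∀ a, Sm (u a))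
    (y : En n) : lapS (fun z => ∑ a, u a z) y = ∑ a, lapS (u a) y := by
  unfold lapS
  rw [Finset.sum_comm]
  refine Finset.sum_congr rfl fun i _ => ?_
  simp only [pder_sum hu]
  rw [pder_sum (fun a => (hu a).pder i)]

theorem lapS_pder (hf : Sm f) (k : Fin n) (y : En n) :
    lapS (fun z => pder k f z) y = pder k (fun z => lapS f z) y := by
  unfold lapS
  rw [pder_sum (fun i => (hf.pder i).pder i)]
  refine Finset.sum_congr rfl fun i _ => ?_
  have : (fun z => pder i (fun w => pder k f w) z) = fun z => pder k (fun w => pder i f w) z := by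
    ext z; exact pder_comm hf i k z
  rw [this, pder_comm (hf.pder i)]

/-- `Σ y_i²= |y|²`. -/
theorem sum_sq (y : En n) : ∑ i, y i ^ 2 = ‖y‖ ^ 2 := by
  rw [EuclideanSpace.norm_sq_eq]; simp

theorem pder_nsq (i : Fin n) (y : En n) : pder i (fun y => ‖y‖ ^ 2) y = 2 * y i := by
  have : (fun y : En n => ‖y‖ ^ 2) = fun y => ∑ j, y j * y j := by
    ext z; rw [← sum_sq]; simp [sq]
  rw [this, pder_sum (fun a => (Sm.coord a).mul (Sm.coord a))]
  simp only [pder_mul (Sm.coord _) (Sm.coord _), pder_coord]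
  simp only [ite_mul, mul_ite, one_mul, zero_mul, mul_one, mul_zero, Finset.sum_add_distrib,
    Finset.sum_ite_eq', Finset.mem_univ, if_true]
  ring

/-- One dimensional second order necessary condition. -/
theorem snd_der_nonpos {φ : ℝ → ℝ} (hφ : ContDiff ℝ 2 φ) (h : IsLocalMax φ 0) :
    deriv (deriv φ) 0 ≤ 0 := by
  by_contra hc
  push Not at hc
  have h1 := isLocalMin_of_deriv_deriv_pos hc h.deriv_eq_zero hφ.continuous.continuousAt
  have h2 : φ =ᶠ[nhds 0] fun _ => φ 0 := by
    filter_upwards [h, h1] with x a b using le_antisymm a b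
  have h3 : deriv φ =ᶠ[nhds 0] deriv (fun _ => φ 0) := h2.deriv
  have := h3.deriv_eq
  simp at this
  linarith

theorem localMax_test (hf : Sm f) {y : En n} (h : IsLocalMax f y) :
    (∀ i, pder i f y = 0) ∧ lapS f y ≤ 0 := by
  refine ⟨fun i => by unfold pder; rw [h.fderiv_eq_zero]; rfl, ?_⟩
  unfold lapS
  refine Finset.sum_nonpos fun i _ => ?_
  set e : En n := EuclideanSpace.single i 1
  have hline : ∀ t : ℝ, HasDerivAt (fun t : ℝ => y + t • e) e t := fun t => by
    simpa using ((hasDerivAt_id t).smul_const e).const_add y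
  have hd : ∀ (g : En n → ℝ) (_ : Sm g) (t : ℝ),
      HasDerivAt (fun t : ℝ => g (y + t • e)) (pder i g (y + t • e)) t := fun g hg t =>
    (hg.dat (y + t • e)).hasFDerivAt.comp_hasDerivAt t (hline t)
  have hφ : ContDiff ℝ 2 (fun t : ℝ => f (y + t • e)) := by
    have : ContDiff ℝ 2 f := hf.of_le (by norm_cast)
    exact this.comp (by fun_prop)
  have hm : IsLocalMax (fun t : ℝ => f (y + t • e)) 0 := by
    have hc : ContinuousAt (fun t : ℝ => y + t • e) 0 := by fun_prop
    have h' : IsLocalMax f (y + (0:ℝ) • e) := by simpa using h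
    exact hc.tendsto.eventually h'
  have := snd_der_nonpos hφ hm
  have e1 : deriv (fun t : ℝ => f (y + t • e)) = fun t => pder i f (y + t • e) := by
    ext t; exact (hd f hf t).deriv
  rw [e1, (hd _ (hf.pder i) 0).deriv] at this
  simpa using this

end calculus

section tau
variable {n : ℕ}

/-- `τ(y) = 1+|y|²`. -/
noncomputable def tau (y : En n) : ℝ := 1 + ‖y‖ ^ 2

theorem one_le_tau (y : En n) : 1 ≤ tau y := by unfold tau; nlinarith [sq_nonneg ‖y‖]
theorem tau_pos (y : En n) : 0 < tau y := lt_of_lt_of_le one_pos (one_le_tau y)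

theorem Sm.stau : Sm (fun y : En n => tau y) := contDiff_const.add Sm.nsq

theorem pder_tau (i : Fin n) (y : En n) : pder i (fun y => tau y) y = 2 * y i := by
  unfold tau
  rw [pder_add (Sm.cst 1) Sm.nsq, pder_cst, pder_nsq]; ring

theorem Sm.taup (p : ℝ) : Sm (fun y : En n => tau y ^ p) :=
  Sm.stau.rpow_const_of_ne fun y => (tau_pos y).ne'

theorem pder_taup (p : ℝ) (i : Fin n) (y : En n) :
    pder i (fun y => tau y ^ p) y = 2 * p * (y i * tau y ^ (p - 1)) := by
  rw [pder_comp Sm.stau (φ := fun t => t ^ p) i y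
    (Real.hasDerivAt_rpow_const (Or.inl (tau_pos y).ne')), pder_tau]
  ring

theorem lapS_taup (p : ℝ) (y : En n) :
    lapS (fun y => tau y ^ p) y
      = 2 * n * p * tau y ^ (p - 1) + 4 * p * (p - 1) * (tau y - 1) * tau y ^ (p - 2) := by
  unfold lapS
  simp only [pder_taup]
  have : ∀ i : Fin n, pder i (fun z : En n => 2 * p * (z i * tau z ^ (p - 1))) y
      = 2 * p * tau y ^ (p-1) + 4 * p * (p-1) * tau y ^ (p-2) * y i ^ 2 := by
    intro i
    rw [pder_cmul ((Sm.coord i).mul (Sm.taup _)), pder_mul (Sm.coord i) (Sm.taup _), pder_taup,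
      pder_coord]
    rw [show p - 1 - 1 = p - 2 by ring]
    simp; ring
  simp only [this, Finset.sum_add_distrib, ← Finset.mul_sum, sum_sq]
  simp [tau]; ring

theorem Sm.taue (β : ℝ) : Sm (fun y : En n => Real.exp (β * tau y)) :=
  (contDiff_const.mul Sm.stau).exp

theorem pder_taue (β : ℝ) (i : Fin n) (y : En n) :
    pder i (fun y => Real.exp (β * tau y)) y = 2 * β * (y i * Real.exp (β * tau y)) := by
  rw [pder_comp (f := fun y => β * tau y) (contDiff_const.mul Sm.stau) (φ := fun t => Real.exp t) i y
    (Real.hasDerivAt_exp _), pder_cmul Sm.stau, pder_tau]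
  ring

theorem lapS_taue (β : ℝ) (y : En n) :
    lapS (fun y => Real.exp (β * tau y)) y
      = (2 * n * β  + 4 * β ^ 2 * (tau y - 1)) * Real.exp (β * tau y) := by
  unfold lapS
  simp only [pder_taue]
  have : ∀ i : Fin n, pder i (fun z : En n => 2 * β * (z i * Real.exp (β * tau z))) y
      = 2 * β * Real.exp (β * tau y) + 4 * β ^ 2 * Real.exp (β * tau y) * y i ^ 2 := by
    intro i
    rw [pder_cmul ((Sm.coord i).mul (Sm.taue _)), pder_mul (Sm.coord i) (Sm.taue _), pder_taue,
      pder_coord]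
    simp; ring
  simp only [this, Finset.sum_add_distrib, ← Finset.mul_sum, sum_sq]
  simp [tau]; ring

end tau
end EW


namespace EW

section symbols
variable {n : ℕ}

/-- Pointwise weighted bound. -/
def BD (p : ℝ) (f : En n → ℝ) : Prop := ∃ C : ℝ, ∀ y, |f y| ≤ C * tau y ^ p

/-- Symbols: derivatives up to order `k`, each derivative gaining half a power of `τ`. -/
def SymK : ℕ → ℝ → (En n → ℝ) → Prop
  | 0, p, f => BD p f
  | (k + 1), p, f => BD p f ∧ ∀ i, SymK k (p - 1 / 2) (fun y => pder i f y)

theorem taup_pos (p : ℝ) (y : En n) : 0 < tau y ^ p := Real.rpow_pos_of_pos (tau_pos y) p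

theorem BD.nn {p : ℝ} {f : En n → ℝ} (h : BD p f) : ∃ C : ℝ, 0 ≤ C ∧ ∀ y, |f y| ≤ C * tau y ^ p := by
  obtain ⟨C, hC⟩ := h
  refine ⟨max C 0, le_max_right _ _, fun y => (hC y).trans ?_⟩
  exact mul_le_mul_of_nonneg_right (le_max_left _ _) (taup_pos p y).le

theorem BD.add {p : ℝ} {f g : En n → ℝ} (hf : BD p f) (hg : BD p g) : BD p (fun y => f y + g y) := by
  obtain ⟨C, hC⟩ := hf
  obtain ⟨D, hD⟩ := hg
  refine ⟨C + D, fun y => (abs_add_le _ _).trans ?_⟩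
  linarith [hC y, hD y]

theorem BD.mul {p q : ℝ} {f g : En n → ℝ} (hf : BD p f) (hg : BD q g) :
    BD (p + q) (fun y => f y * g y) := by
  obtain ⟨C, hC⟩ := hf
  obtain ⟨D, hD⟩ := hg
  refine ⟨C * D, fun y => ?_⟩
  rw [abs_mul, Real.rpow_add (tau_pos y)]
  calc |f y| * |g y| ≤ (C * tau y ^ p) * (D * tau y ^ q) :=
        mul_le_mul (hC y) (hD y) (abs_nonneg _) ((abs_nonneg _).trans (hC y))
    _ = _ := by ring

theorem BD.zero (p : ℝ) : BD p (fun _ : En n => (0:ℝ)) := ⟨0, fun y => by simp⟩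

theorem SymK.bd {k : ℕ} {p : ℝ} {f : En n → ℝ} (h : SymK k p f) : BD p f := by
  cases k with
  | zero => exact h
  | succ k => exact h.1

theorem SymK.zero (k : ℕ) : ∀ p : ℝ, SymK k p (fun _ : En n => (0:ℝ)) := by
  induction k with
  | zero => exact BD.zero
  | succ k ih =>
    intro p
    refine ⟨BD.zero p, fun i => ?_⟩
    simp only [pder_cst]
    exact ih _

theorem SymK.mono {k : ℕ} : ∀ {p : ℝ} {f : En n → ℝ}, SymK (k + 1) p f → SymK k p f := by
  induction k with
  | zero => intro p f h; exact h.1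
  | succ k ih => intro p f h; exact ⟨h.1, fun i => ih (h.2 i)⟩

theorem SymK.cst (k : ℕ) (c : ℝ) : SymK k 0 (fun _ : En n => c) := by
  have hb : BD 0 (fun _ : En n => c) := ⟨|c|, fun y => by simp⟩
  cases k with
  | zero => exact hb
  | succ k =>
    refine ⟨hb, fun i => ?_⟩
    simp only [pder_cst]
    exact SymK.zero k _

theorem SymK.add {k : ℕ} : ∀ {p : ℝ} {f g : En n → ℝ}, Sm f → Sm g → SymK k p f → SymK k p g →
    SymK k p (fun y => f y + g y) := by
  induction k with
  | zero => intro p f g _ _ hf hg; exact BD.add hf hg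
  | succ k ih =>
    intro p f g sf sg hf hg
    refine ⟨BD.add hf.1 hg.1, fun i => ?_⟩
    simp only [pder_add sf sg]
    exact ih (sf.pder i) (sg.pder i) (hf.2 i) (hg.2 i)

theorem SymK.mul {k : ℕ} : ∀ {p q : ℝ} {f g : En n → ℝ}, Sm f → Sm g → SymK k p f → SymK k q g →
    SymK k (p + q) (fun y => f y * g y) := by
  induction k with
  | zero => intro p q f g _ _ hf hg; exact BD.mul hf hg
  | succ k ih =>
    intro p q f g sf sg hf hg
    refine ⟨BD.mul hf.1 hg.1, fun i => ?_⟩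
    simp only [pder_mul sf sg]
    refine SymK.add ((sf.pder i).mul sg) (sf.mul (sg.pder i)) ?_ ?_
    · have := ih (sf.pder i) sg (hf.2 i) hg.mono
      rwa [show p - 1 / 2 + q = p + q - 1 / 2 by ring] at this
    · have := ih sf (sg.pder i) hf.mono (hg.2 i)
      rwa [show p + (q - 1 / 2) = p + q - 1 / 2 by ring] at this

theorem SymK.cmul {k : ℕ} {p : ℝ} {f : En n → ℝ} (c : ℝ) (sf : Sm f) (hf : SymK k p f) :
    SymK k p (fun y => c * f y) := by
  have := SymK.mul (Sm.cst c) sf (SymK.cst k c) hf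
  rwa [zero_add] at this

theorem SymK.sub {k : ℕ} {p : ℝ} {f g : En n → ℝ} (sf : Sm f) (sg : Sm g) (hf : SymK k p f)
    (hg : SymK k p g) : SymK k p (fun y => f y - g y) := by
  have := SymK.add sf (contDiff_const.mul sg) hf (SymK.cmul (-1) sg hg)
  simpa [sub_eq_add_neg] using this

theorem SymK.sumf {k : ℕ} {p : ℝ} {ι : Type*} (s : Finset ι) {u : ι → En n → ℝ}
    (su : ∀ a, Sm (u a)) (hu : ∀ a, SymK k p (u a)) : SymK k p (fun y => ∑ a ∈ s, u a y) := by
  classical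
  induction s using Finset.induction_on with
  | empty => simpa using SymK.zero k p
  | insert a s ha ih =>
    simp only [Finset.sum_insert ha]
    exact SymK.add (su a) (ContDiff.sum fun a _ => su a) (hu a) ih

theorem abs_coord_le (y : En n) (i : Fin n) : |y i| ≤ tau y ^ (1 / 2 : ℝ) := by
  rw [← Real.sqrt_eq_rpow]
  apply Real.abs_le_sqrt
  have := Finset.single_le_sum (f := fun i => y i ^ 2) (fun i _ => sq_nonneg _) (Finset.mem_univ i)
  simp only [sum_sq] at this
  unfold tau; linarith

theorem SymK.coord (k : ℕ) (i : Fin n) : SymK k (1 / 2) (fun y : En n => y i) := by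
  have hb : BD (1 / 2) (fun y : En n => y i) := ⟨1, fun y => by rw [one_mul]; exact abs_coord_le y i⟩
  cases k with
  | zero => exact hb
  | succ k =>
    refine ⟨hb, fun j => ?_⟩
    simp only [pder_coord]
    rw [sub_self]
    exact SymK.cst k _

end symbols

section qpot
variable {n : ℕ}

theorem SymK.inv (k : ℕ) {a b : ℝ} (ha : 0 < a) (hb : 0 < b) :
    SymK k (-1) (fun y : En n => (a * ‖y‖ ^ 2 + b)⁻¹) := by
  have hpos : ∀ y : En n, 0 < a * ‖y‖ ^ 2 + b := fun y => by positivity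
  have sm0 : Sm (fun y : En n => a * ‖y‖ ^ 2 + b) := (contDiff_const.mul Sm.nsq).add contDiff_const
  have sm : Sm (fun y : En n => (a * ‖y‖ ^ 2 + b)⁻¹) := sm0.inv fun y => (hpos y).ne'
  have hbd : BD (-1) (fun y : En n => (a * ‖y‖ ^ 2 + b)⁻¹) := by
    refine ⟨(min a b)⁻¹, fun y => ?_⟩
    have hm : 0 < min a b := lt_min ha hb
    rw [abs_of_pos (inv_pos.2 (hpos y)), Real.rpow_neg_one, ← mul_inv]
    apply inv_anti₀ (mul_pos hm (tau_pos y))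
    unfold tau
    nlinarith [min_le_left a b, min_le_right a b, sq_nonneg ‖y‖]
  induction k with
  | zero => exact hbd
  | succ k ih =>
    refine ⟨hbd, fun i => ?_⟩
    have : (fun y : En n => pder i (fun y => (a * ‖y‖ ^ 2 + b)⁻¹) y)
        = fun y => (-2 * a) * (y i * ((a * ‖y‖ ^ 2 + b)⁻¹ * (a * ‖y‖ ^ 2 + b)⁻¹)) := by
      ext y
      rw [pder_comp sm0 (φ := fun t => t⁻¹) i y (hasDerivAt_inv (hpos y).ne'),
        pder_add (contDiff_const.mul Sm.nsq) contDiff_const, pder_cst, pder_cmul Sm.nsq, pder_nsq]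
      field_simp
      ring
    rw [this]
    have := SymK.cmul (-2 * a) ((Sm.coord i).mul (sm.mul sm))
      (SymK.mul (Sm.coord i) (sm.mul sm) (SymK.coord k i) (SymK.mul sm sm ih ih))
    convert this using 1
    norm_num

end qpot
end EW


namespace EW

/-- A drift-Laplace system whose lower order coefficients are symbols of decaying order. -/
structure Sys {n : ℕ} {ι : Type} [Fintype ι] (k : ℕ) (c : ℝ) (u : ι → En n → ℝ)
    (B : ι → Fin n → ι → En n → ℝ) (V : ι → ι → En n → ℝ) (S : ι → En n → ℝ) : Prop where
  su : ∀ a, Sm (u a)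
  sB : ∀ a i b, Sm (B a i b)
  sV : ∀ a b, Sm (V a b)
  sS : ∀ a, Sm (S a)
  symB : ∀ a i b, SymK k (-1 / 2) (B a i b)
  symV : ∀ a b, SymK k (-1) (V a b)
  symS : ∀ a, SymK k (c - 1) (S a)
  eq : ∀ a y, lapS (u a) y - 1 / 2 * ∑ i, y i * pder i (u a) y + c * u a y
    = ∑ i, ∑ b, B a i b y * pder i (u b) y + ∑ b, V a b y * u b y + S a y

section
variable {n : ℕ} {ι : Type} [Fintype ι] {k : ℕ} {c : ℝ} {u : ι → En n → ℝ}
    {B : ι → Fin n → ι → En n → ℝ} {V : ι → ι → En n → ℝ} {S : ι → En n → ℝ}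

theorem Sys.mono (h : Sys (k + 1) c u B V S) : Sys k c u B V S where
  su := h.su
  sB := h.sB
  sV := h.sV
  sS := h.sS
  symB a i b := (h.symB a i b).mono
  symV a b := (h.symV a b).mono
  symS a := (h.symS a).mono
  eq := h.eq

/-- The gradient of a solution. -/
noncomputable def dU (u : ι → En n → ℝ) : Fin n × ι → En n → ℝ := fun p y => pder p.1 (u p.2) y

/-- First order coefficients of the differentiated system. -/
def dB (B : ι → Fin n → ι → En n → ℝ) : Fin n × ι → Fin n → Fin n × ι → En n → ℝ :=
  fun p i q y => if p.1 = q.1 then B p.2 i q.2 y else 0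

/-- Zeroth order coefficients of the differentiated system. -/
noncomputable def dV (B : ι → Fin n → ι → En n → ℝ) (V : ι → ι → En n → ℝ) :
    Fin n × ι → Fin n × ι → En n → ℝ :=
  fun p q y => (if p.1 = q.1 then V p.2 q.2 y else 0) + pder p.1 (B p.2 q.1 q.2) y

/-- Source of the differentiated system. -/
noncomputable def dS (u : ι → En n → ℝ) (V : ι → ι → En n → ℝ) (S : ι → En n → ℝ) :
    Fin n × ι → En n → ℝ :=
  fun p y => pder p.1 (S p.2) y + ∑ b, pder p.1 (V p.2 b) y * u b y

theorem Sys.deriv (h : Sys (k + 1) c u B V S) (hu : ∀ a, SymK k c (u a)) :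
    Sys k (c - 1 / 2) (dU u) (dB B) (dV B V) (dS u V S) where
  su p := (h.su p.2).pder p.1
  sB p i q := by
    unfold dB
    by_cases hpq : p.1 = q.1
    · simp only [hpq, if_true]; exact h.sB _ _ _
    · simp only [hpq, if_false]; exact Sm.cst 0
  sV p q := by
    unfold dV
    by_cases hpq : p.1 = q.1
    · simp only [hpq, if_true]; exact (h.sV _ _).add ((h.sB _ _ _).pder _)
    · simp only [hpq, if_false]; exact (Sm.cst 0).add ((h.sB _ _ _).pder _)
  sS p := ((h.sS _).pder _).add (Sm.sumf fun b => ((h.sV _ _).pder _).mul (h.su b))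
  symB p i q := by
    unfold dB
    by_cases hpq : p.1 = q.1
    · simp only [hpq, if_true]; exact (h.symB _ _ _).mono
    · simp only [hpq, if_false]; exact SymK.zero _ _
  symV p q := by
    unfold dV
    have h2 := (h.symB p.2 q.1 q.2).2 p.1
    rw [show (-1 / 2 - 1 / 2 : ℝ) = -1 by norm_num] at h2
    by_cases hpq : p.1 = q.1
    · simp only [hpq, if_true]; rw [hpq] at h2
      exact SymK.add (h.sV _ _) ((h.sB _ _ _).pder _) (h.symV _ _).mono h2
    · simp only [hpq, if_false]
      exact SymK.add (Sm.cst 0) ((h.sB _ _ _).pder _) (SymK.zero _ _) h2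
  symS p := by
    unfold dS
    refine SymK.add ((h.sS _).pder _) (Sm.sumf fun b => ((h.sV _ _).pder _).mul (h.su b)) ?_ ?_
    · have := (h.symS p.2).2 p.1
      rwa [show c - 1 - 1 / 2 = c - 1 / 2 - 1 by ring] at this
    · refine SymK.sumf _ (fun b => ((h.sV _ _).pder _).mul (h.su b)) fun b => ?_
      have := SymK.mul ((h.sV p.2 b).pder p.1) (h.su b) ((h.symV p.2 b).2 p.1) (hu b)
      rwa [show -1 - 1 / 2 + c = c - 1 / 2 - 1 by ring] at this
  eq := by
    rintro ⟨l, a⟩ y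
    have su := h.su
    have hfun : (fun y => lapS (u a) y - 1 / 2 * ∑ i, y i * pder i (u a) y + c * u a y)
      = fun y => ∑ i, ∑ b, B a i b y * pder i (u b) y + ∑ b, V a b y * u b y + S a y := by
      ext y; exact h.eq a y
    have key := congrArg (fun F => pder l F y) hfun
    simp only at key
    have s1 : Sm fun y => ∑ i, y i * pder i (u a) y :=
      Sm.sumf fun i => (Sm.coord i).mul ((su a).pder i)
    have s2 : ∀ i, Sm fun y => ∑ b, B a i b y * pder i (u b) y := fun i =>
      Sm.sumf fun b => (h.sB a i b).mul ((su b).pder i)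
    have s3 : Sm fun y => ∑ b, V a b y * u b y := Sm.sumf fun b => (h.sV a b).mul (su b)
    rw [pder_add ((su a).lapS.sub (contDiff_const.mul s1)) (contDiff_const.mul (su a)),
      pder_sub (su a).lapS (contDiff_const.mul s1), pder_cmul s1, pder_cmul (su a),
      pder_sum (fun i => (Sm.coord i).mul ((su a).pder i)),
      pder_add ((Sm.sumf s2).add s3) (h.sS a), pder_add (Sm.sumf s2) s3, pder_sum s2,
      pder_sum (fun b => (h.sV a b).mul (su b))] at key
    simp only [fun i => pder_sum (fun b => (h.sB a i b).mul ((su b).pder i)) l y,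
      fun i => pder_mul (Sm.coord i) ((su a).pder i) l y,
      fun i b => pder_mul (h.sB a i b) ((su b).pder i) l y,
      fun b => pder_mul (h.sV a b) (su b) l y, pder_coord] at key
    unfold dU dB dV dS
    simp only [Fintype.sum_prod_type]
    rw [lapS_pder (su a)]
    simp only [add_mul, ite_mul, zero_mul, one_mul, Finset.sum_add_distrib] at key ⊢
    rw [Finset.sum_ite_eq' Finset.univ l (fun i => pder i (u a) y)] at key
    simp only [Finset.mem_univ, if_true] at key
    have e1 : ∀ i : Fin n, pder l (fun z => pder i (u a) z) y = pder i (fun z => pder l (u a) z) y :=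
      fun i => pder_comm (su a) _ _ _
    have e2 : ∀ (i : Fin n) (b : ι), pder l (fun z => pder i (u b) z) y
      = pder i (fun z => pder l (u b) z) y := fun i b => pder_comm (su b) _ _ _
    simp only [e1, e2] at key
    have e3 : ∀ F : Fin n → ι → ℝ, ∑ x : Fin n, ∑ b, (if l = x then F x b else 0) = ∑ b, F l b := by
      intro F
      rw [Finset.sum_eq_single l] <;> simp +contextual [eq_comm]
    simp only [e3]
    linarith

/-- `Σ u_a²`. -/
noncomputable def fq (u : ι → En n → ℝ) (y : En n) : ℝ := ∑ a, u a y * u a y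

/-- `Σ |∂_i u_a|²`. -/
noncomputable def gq (u : ι → En n → ℝ) (y : En n) : ℝ := ∑ i, ∑ a, pder i (u a) y * pder i (u a) y

theorem fq_dU (u : ι → En n → ℝ) (y : En n) : fq (dU u) y = gq u y := by
  unfold fq gq dU; rw [Fintype.sum_prod_type]

theorem fq_nonneg (u : ι → En n → ℝ) (y : En n) : 0 ≤ fq u y :=
  Finset.sum_nonneg fun _ _ => mul_self_nonneg _

theorem gq_nonneg (u : ι → En n → ℝ) (y : En n) : 0 ≤ gq u y :=
  Finset.sum_nonneg fun _ _ => Finset.sum_nonneg fun _ _ => mul_self_nonneg _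

theorem fq_sm (hu : ∀ a, Sm (u a)) : Sm (fun y => fq u y) := Sm.sumf fun a => (hu a).mul (hu a)

theorem pder_fq (hu : ∀ a, Sm (u a)) (i : Fin n) (y : En n) :
    pder i (fun y => fq u y) y = 2 * ∑ a, u a y * pder i (u a) y := by
  unfold fq
  rw [pder_sum fun a => (hu a).mul (hu a), Finset.mul_sum]
  refine Finset.sum_congr rfl fun a _ => ?_
  rw [pder_mul (hu a) (hu a)]; ring

theorem lapS_fq (hu : ∀ a, Sm (u a)) (y : En n) :
    lapS (fun y => fq u y) y = 2 * ∑ a, u a y * lapS (u a) y + 2 * gq u y := by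
  unfold fq gq
  rw [lapS_sum fun a => (hu a).mul (hu a), Finset.sum_comm, Finset.mul_sum, Finset.mul_sum,
    ← Finset.sum_add_distrib]
  refine Finset.sum_congr rfl fun a _ => ?_
  rw [lapS_mul (hu a) (hu a)]; ring

theorem kato (hu : ∀ a, Sm (u a)) (y : En n) :
    ∑ i, (pder i (fun y => fq u y) y) ^ 2 ≤ 4 * fq u y * gq u y := by
  unfold gq
  rw [Finset.mul_sum]
  refine Finset.sum_le_sum fun i _ => ?_
  rw [pder_fq hu]
  have := Finset.sum_mul_sq_le_sq_mul_sq Finset.univ (fun a => u a y) (fun a => pder i (u a) y)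
  simp only [sq] at this
  unfold fq
  nlinarith

theorem abs_le_sqrt_fq (u : ι → En n → ℝ) (a : ι) (y : En n) : |u a y| ≤ √(fq u y) := by
  apply Real.abs_le_sqrt
  rw [sq]
  exact Finset.single_le_sum (f := fun a => u a y * u a y) (fun _ _ => mul_self_nonneg _)
    (Finset.mem_univ a)

theorem abs_le_sqrt_gq (u : ι → En n → ℝ) (i : Fin n) (a : ι) (y : En n) :
    |pder i (u a) y| ≤ √(gq u y) := by
  have := abs_le_sqrt_fq (dU u) (i, a) y
  rwa [fq_dU] at this

/-- First and zeroth order terms. -/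
noncomputable def Rt (u : ι → En n → ℝ) (B : ι → Fin n → ι → En n → ℝ) (V : ι → ι → En n → ℝ)
    (a : ι) (y : En n) : ℝ := ∑ i, ∑ b, B a i b y * pder i (u b) y + ∑ b, V a b y * u b y

theorem exists_unif {κ : Type*} [Fintype κ] {p : ℝ} {F : κ → En n → ℝ} (h : ∀ a, BD p (F a)) :
    ∃ C : ℝ, 0 ≤ C ∧ ∀ a y, |F a y| ≤ C * tau y ^ p := by
  choose C h0 hC using fun a => (h a).nn
  refine ⟨∑ a, C a, Finset.sum_nonneg fun a _ => h0 a, fun a y => (hC a y).trans ?_⟩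
  exact mul_le_mul_of_nonneg_right
    (Finset.single_le_sum (fun a _ => h0 a) (Finset.mem_univ a)) (taup_pos p y).le

theorem Sys.Rbound (h : Sys k c u B V S) : ∃ C : ℝ, 0 ≤ C ∧ ∀ y,
    |∑ a, u a y * Rt u B V a y|
      ≤ √(fq u y) * (C * tau y ^ (-1 / 2 : ℝ) * √(gq u y) + C * tau y ^ (-1 : ℝ) * √(fq u y)) := by
  obtain ⟨C1, h1, hC1⟩ := exists_unif (κ := ι × Fin n × ι) (F := fun p => B p.1 p.2.1 p.2.2)
    fun p => (h.symB _ _ _).bd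
  obtain ⟨C2, h2, hC2⟩ := exists_unif (κ := ι × ι) (F := fun p => V p.1 p.2)
    fun p => (h.symV _ _).bd
  set N : ℝ := ((Fintype.card ι : ℕ) : ℝ) with hN
  have hN0 : 0 ≤ N := by positivity
  refine ⟨N * (n * (N * C1)) + N * (N * C2), by positivity, fun y => ?_⟩
  have hR : ∀ a, |Rt u B V a y| ≤ n * (N * (C1 * tau y ^ (-1 / 2 : ℝ) * √(gq u y)))
      + N * (C2 * tau y ^ (-1 : ℝ) * √(fq u y)) := by
    intro a
    unfold Rt
    refine (abs_add_le _ _).trans (add_le_add ?_ ?_)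
    · refine (Finset.abs_sum_le_sum_abs _ _).trans ?_
      refine (Finset.sum_le_card_nsmul _ _ (N * (C1 * tau y ^ (-1 / 2 : ℝ) * √(gq u y)))
        fun i _ => ?_).trans (by simp)
      refine (Finset.abs_sum_le_sum_abs _ _).trans ?_
      refine (Finset.sum_le_card_nsmul _ _ (C1 * tau y ^ (-1 / 2 : ℝ) * √(gq u y))
        fun b _ => ?_).trans (by simp [hN])
      rw [abs_mul]
      exact mul_le_mul (hC1 (a, i, b) y) (abs_le_sqrt_gq u i b y) (abs_nonneg _)
        (mul_nonneg h1 (taup_pos _ y).le)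
    · refine (Finset.abs_sum_le_sum_abs _ _).trans ?_
      refine (Finset.sum_le_card_nsmul _ _ (C2 * tau y ^ (-1 : ℝ) * √(fq u y))
        fun b _ => ?_).trans (by simp [hN])
      rw [abs_mul]
      exact mul_le_mul (hC2 (a, b) y) (abs_le_sqrt_fq u b y) (abs_nonneg _)
        (mul_nonneg h2 (taup_pos _ y).le)
  refine (Finset.abs_sum_le_sum_abs _ _).trans ?_
  refine (Finset.sum_le_card_nsmul _ _ (√(fq u y) *
    (n * (N * (C1 * tau y ^ (-1 / 2 : ℝ) * √(gq u y))) + N * (C2 * tau y ^ (-1 : ℝ) * √(fq u y))))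
    fun a _ => ?_).trans ?_
  · rw [abs_mul]
    exact mul_le_mul (abs_le_sqrt_fq u a y) (hR a) (abs_nonneg _) (Real.sqrt_nonneg _)
  · simp only [Finset.card_univ, nsmul_eq_mul]
    rw [← hN]
    have p1 := (taup_pos (-1/2) y).le
    have p2 := (taup_pos (-1) y).le
    have q1 := Real.sqrt_nonneg (fq u y)
    have q2 := Real.sqrt_nonneg (gq u y)
    have : 0 ≤ √(fq u y) * (N * (N * C2) * (tau y ^ (-1 / 2 : ℝ) * √(gq u y)) +
      N * (n * (N * C1)) * (tau y ^ (-1 : ℝ) * √(fq u y))) := by positivity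
    linarith

theorem Sys.Sbound (h : Sys k c u B V S) : ∃ C : ℝ, 0 ≤ C ∧ ∀ y,
    |∑ a, u a y * S a y| ≤ √(fq u y) * (C * tau y ^ (c - 1)) := by
  obtain ⟨C1, h1, hC1⟩ := exists_unif (F := S) fun a => (h.symS a).bd
  refine ⟨Fintype.card ι * C1, by positivity, fun y => ?_⟩
  refine (Finset.abs_sum_le_sum_abs _ _).trans ?_
  refine (Finset.sum_le_card_nsmul _ _ (√(fq u y) * (C1 * tau y ^ (c - 1))) fun a _ => ?_).trans ?_
  · rw [abs_mul]
    exact mul_le_mul (abs_le_sqrt_fq u a y) (hC1 a y) (abs_nonneg _) (Real.sqrt_nonneg _)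
  · simp only [Finset.card_univ, nsmul_eq_mul]
    apply le_of_eq; ring

theorem Sys.sum_lap (h : Sys k c u B V S) (y : En n) :
    ∑ a, u a y * lapS (u a) y = 1 / 4 * ∑ i, y i * pder i (fun y => fq u y) y - c * fq u y
      + ∑ a, u a y * Rt u B V a y + ∑ a, u a y * S a y := by
  have e : ∀ a, u a y * lapS (u a) y = 1 / 2 * ∑ i, y i * (u a y * pder i (u a) y)
      - c * (u a y * u a y) + u a y * Rt u B V a y + u a y * S a y := by
    intro a
    have := h.eq a y
    have e2 : ∑ i, y i * (u a y * pder i (u a) y) = u a y * ∑ i, y i * pder i (u a) y := by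
      rw [Finset.mul_sum]; exact Finset.sum_congr rfl fun i _ => by ring
    rw [e2]
    unfold Rt
    linear_combination (u a y) * this
  simp only [e, Finset.sum_add_distrib, Finset.sum_sub_distrib, ← Finset.mul_sum]
  rw [Finset.sum_comm]
  simp only [pder_fq h.su, ← Finset.mul_sum]
  have : ∑ i, y i * (2 * ∑ a, u a y * pder i (u a) y) = 2 * ∑ i, y i * ∑ a, u a y * pder i (u a) y := by
    rw [Finset.mul_sum]; exact Finset.sum_congr rfl fun i _ => by ring
  rw [this]
  unfold fq
  ring

/-- Bochner type inequality. -/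
theorem Sys.boch (h : Sys k c u B V S) : ∃ C : ℝ, 0 ≤ C ∧ ∀ y,
    gq u y - C * fq u y - 2 * |∑ a, u a y * S a y|
      ≤ lapS (fun y => fq u y) y - 1 / 2 * ∑ i, y i * pder i (fun y => fq u y) y := by
  obtain ⟨C, h0, hC⟩ := h.Rbound
  refine ⟨2 * |c| + C ^ 2 + 2 * C, by positivity, fun y => ?_⟩
  rw [lapS_fq h.su, h.sum_lap]
  have h1 := (abs_le.1 (hC y)).1
  have h2 := (abs_le.1 (le_refl |∑ a, u a y * S a y|)).1
  have t1 : tau y ^ (-1 / 2 : ℝ) ≤ 1 := Real.rpow_le_one_of_one_le_of_nonpos (one_le_tau y) (by norm_num)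
  have t2 : tau y ^ (-1 : ℝ) ≤ 1 := Real.rpow_le_one_of_one_le_of_nonpos (one_le_tau y) (by norm_num)
  have q1 := Real.sqrt_nonneg (fq u y)
  have q2 := Real.sqrt_nonneg (gq u y)
  have r1 := Real.sq_sqrt (fq_nonneg u y)
  have r2 := Real.sq_sqrt (gq_nonneg u y)
  set X := √(fq u y)
  set Y := √(gq u y)
  have b1 : X * (C * tau y ^ (-1 / 2 : ℝ) * Y + C * tau y ^ (-1 : ℝ) * X) ≤ X * (C * 1 * Y + C * 1 * X) := by
    gcongr
  have b2 : c * fq u y ≤ |c| * fq u y := mul_le_mul_of_nonneg_right (le_abs_self c) (fq_nonneg u y)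
  nlinarith [sq_nonneg (Y - C * X)]

end
end EW


namespace EW

theorem barrier_id (n c K i τ x C a : ℝ) (hti : τ * i = 1) :
    2 * n * (x * (c - (c - 1) * (K * i))) + 4 * (τ - 1) * (c * (c - 1) * (x * i)
          - K * (c - 1) * (c - 2) * (x * i * i)) - (τ - 1) * (x * (c - (c - 1) * (K * i)))
          + c * (τ * x - K * x) + 2 * C * (x * a) + C * i * (τ * x - K * x) + C * x
        = x * (2 * n * (c - (c - 1) * (K * i))
          + 4 * ((τ - 1) * i) * (c * (c - 1) - (c - 1) * (c - 2) * (K * i))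
          + (c - K - (c - 1) * (K * i)) + 2 * C * a + C * (1 - (K * i)) + C) := by
  linear_combination (x * (c - 1) * K + C * x) * hti

theorem barrier (n : ℕ) (c C β : ℝ) (hC : 0 ≤ C) (hβ : 0 < β) (hβ' : β < 1 / 4) :
    ∃ K T0 : ℝ, 0 ≤ K ∧ 1 ≤ T0 ∧ 2 * K ≤ T0 ∧ ∀ τ ≥ T0,
      (2 * n * (c * τ ^ (c - 1) - K * (c - 1) * τ ^ (c - 2))
        + 4 * (τ - 1) * (c * (c - 1) * τ ^ (c - 2) - K * (c - 1) * (c - 2) * τ ^ (c - 3))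
        - (τ - 1) * (c * τ ^ (c - 1) - K * (c - 1) * τ ^ (c - 2))
        + c * (τ ^ c - K * τ ^ (c - 1)) + 2 * C * |c * τ ^ (c - 1) - K * (c - 1) * τ ^ (c - 2)|
        + C * τ⁻¹ * (τ ^ c - K * τ ^ (c - 1)) + C * τ ^ (c - 1) < 0) ∧
      (2 * n * β + 4 * (τ - 1) * β ^ 2 - (τ - 1) * β + c + 2 * C * β + C * τ⁻¹ < 0) := by
  set K : ℝ := 2 * n * (|c| + |c - 1|) + 4 * (|c * (c - 1)| + |(c - 1) * (c - 2)|) + |c| + |c - 1|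
    + 2 * C * (|c| + |c - 1|) + 2 * C + 1 with hK
  have hK0 : 0 ≤ K := by positivity
  have hg : 0 < β * (1 - 4 * β) := mul_pos hβ (by linarith)
  set T0 : ℝ := 1 + 2 * K + (2 * n * β + |c| + 2 * C * β + C + 1) / (β * (1 - 4 * β)) with hT
  have hT2 : 0 ≤ (2 * n * β + |c| + 2 * C * β + C + 1) / (β * (1 - 4 * β)) := by positivity
  clear_value T0
  refine ⟨K, T0, hK0, by linarith, by linarith, fun τ hτ => ⟨?_, ?_⟩⟩
  · have hτ1 : 1 ≤ τ := by linarith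
    have hτ0 : 0 < τ := by linarith
    set x := τ ^ (c - 1) with hx
    have hx0 : 0 < x := Real.rpow_pos_of_pos hτ0 _
    have e0 : τ ^ c = τ * x := by
      rw [hx, Real.rpow_sub hτ0, Real.rpow_one]; field_simp
    have e2 : τ ^ (c - 2) = x * τ⁻¹ := by
      rw [hx, show c - 2 = (c - 1) - 1 by ring, Real.rpow_sub hτ0 (c-1), Real.rpow_one]; rfl
    have e3 : τ ^ (c - 3) = x * τ⁻¹ * τ⁻¹ := by
      rw [← e2, show c - 3 = (c - 2) - 1 by ring, Real.rpow_sub hτ0 (c-2), Real.rpow_one]; rfl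
    rw [e0, e2, e3]
    set i := τ⁻¹ with hi
    have hi0 : 0 < i := inv_pos.2 hτ0
    have hti : τ * i = 1 := mul_inv_cancel₀ hτ0.ne'
    set k := K * i with hk
    have hk0 : 0 ≤ k := by positivity
    have hk1 : k ≤ 1 := by
      rw [hk, hi, ← div_eq_mul_inv, div_le_one hτ0]; linarith
    have hi1 : i ≤ 1 := inv_le_one_of_one_le₀ hτ1
    clear_value k i x
    -- everything is `x` times something
    have bd1 : ∀ a b s : ℝ, 0 ≤ s → s ≤ 1 → |a - b * s| ≤ |a| + |b| := fun a b s h0 h1 => by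
      refine (abs_sub _ _).trans ?_
      rw [abs_mul, abs_of_nonneg h0]
      nlinarith [abs_nonneg b]
    have d1 := bd1 c (c - 1) k hk0 hk1
    have d2 := bd1 (c * (c - 1)) ((c - 1) * (c - 2)) k hk0 hk1
    set d := c - (c - 1) * k with hd
    set d' := c * (c - 1) - (c - 1) * (c - 2) * k with hd'
    have eD : c * x - K * (c - 1) * (x * i) = x * d := by rw [hd, hk]; ring
    rw [eD, abs_mul, abs_of_pos hx0]
    have total : 2 * n * (x * d) + 4 * (τ - 1) * (c * (c - 1) * (x * i)
          - K * (c - 1) * (c - 2) * (x * i * i)) - (τ - 1) * (x * d)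
          + c * (τ * x - K * x) + 2 * C * (x * |d|) + C * i * (τ * x - K * x) + C * x
        = x * (2 * n * d + 4 * ((τ - 1) * i) * d' + (c - K - (c - 1) * k) + 2 * C * |d|
          + C * (1 - k) + C) := by
      rw [hd', hd, hk]; exact barrier_id n c K i τ x C _ hti
    rw [total]
    apply mul_neg_of_pos_of_neg hx0
    have s1 : 0 ≤ (τ - 1) * i := by
      exact mul_nonneg (by linarith) hi0.le
    have s2 : (τ - 1) * i ≤ 1 := by rw [sub_mul, hti]; linarith
    have b1 : 2 * n * d ≤ 2 * n * (|c| + |c - 1|) :=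
      mul_le_mul_of_nonneg_left ((le_abs_self d).trans d1) (by positivity)
    have b2 : 4 * ((τ - 1) * i) * d' ≤ 4 * (|c * (c - 1)| + |(c - 1) * (c - 2)|) := by
      have : ((τ - 1) * i) * d' ≤ 1 * |d'| :=
        (mul_le_mul_of_nonneg_left (le_abs_self d') s1).trans
          (mul_le_mul_of_nonneg_right s2 (abs_nonneg _))
      linarith
    have b3 : 2 * C * |d| ≤ 2 * C * (|c| + |c - 1|) := mul_le_mul_of_nonneg_left d1 (by positivity)
    have b4 : -((c - 1) * k) ≤ |c - 1| := by
      have : |(c - 1) * k| ≤ |c - 1| * 1 := by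
        rw [abs_mul, abs_of_nonneg hk0]; exact mul_le_mul_of_nonneg_left hk1 (abs_nonneg _)
      linarith [neg_abs_le ((c - 1) * k)]
    have b5 : C * (1 - k) ≤ C := mul_le_of_le_one_right hC (by linarith)
    have b6 := le_abs_self c
    linarith
  · have hτ0 : 0 < τ := by linarith
    have hi1 : τ⁻¹ ≤ 1 := inv_le_one_of_one_le₀ (by linarith)
    have h1 : (2 * n * β + |c| + 2 * C * β + C + 1) ≤ (τ - 1) * (β * (1 - 4 * β)) := by
      rw [← div_le_iff₀ hg]; linarith
    have h2 : C * τ⁻¹ ≤ C := mul_le_of_le_one_right hC hi1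
    have h3 := le_abs_self c
    have h4 : (τ - 1) * (β * (1 - 4 * β)) = (τ - 1) * β - 4 * (τ - 1) * β ^ 2 := by ring
    linarith

theorem young_aux (X Z : ℝ) : X * Z ≤ Z ^ 2 + X ^ 2 := by
  nlinarith [sq_nonneg (Z - X), sq_nonneg Z, sq_nonneg X]

/-- Algebraic core of the maximum principle argument at a touching point. -/
theorem touch_core {c C1 C2 κ G D LG τ t f g Xi YG nD E1 w : ℝ}
    (hC1 : 0 ≤ C1) (hC2 : 0 ≤ C2) (hκ : 1 ≤ κ) (hG : 0 < G) (hτ : 1 ≤ τ)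
    (ht0 : 0 ≤ t) (ht : t ^ 2 = τ⁻¹) (hw : 0 ≤ w)
    (hf : f = (κ * G) ^ 2)
    (hkato : κ ^ 4 * (16 * G ^ 2 * D ^ 2 * (τ - 1)) ≤ 4 * f * g)
    (hlap : 2 * Xi + 2 * g ≤ κ ^ 2 * (2 * G * LG + 2 * (4 * (τ - 1) * D ^ 2)))
    (hXi : Xi = 1 / 4 * (κ ^ 2 * (2 * G * YG)) - c * f + E1 + nD)
    (hE : -(√f * (C1 * t * √g + C1 * τ⁻¹ * √f)) ≤ E1)
    (hS : -(√f * (C2 * w)) ≤ nD)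
    (hbar : LG - 1 / 2 * YG + c * G + 2 * C1 * |D| + (C1 + C1 ^ 2) * τ⁻¹ * G + C2 * w < 0) :
    False := by
  set H := κ * G with hH
  have hκ0 : 0 < κ := by linarith
  have hH0 : 0 < H := mul_pos hκ0 hG
  have hsf : √f = H := by rw [hf]; exact Real.sqrt_sq hH0.le
  rw [hsf] at hE hS
  set P := 4 * (τ - 1) * (κ * D) ^ 2 with hP
  have hP0 : 0 ≤ P := by
    have : 0 ≤ τ - 1 := by linarith
    positivity
  have hPg : P ≤ g := by
    have h1 : (4 * H ^ 2) * P ≤ (4 * H ^ 2) * g := by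
      rw [hf] at hkato
      calc (4 * H ^ 2) * P = κ ^ 4 * (16 * G ^ 2 * D ^ 2 * (τ - 1)) := by rw [hP, hH]; ring
        _ ≤ _ := hkato
    exact le_of_mul_le_mul_left h1 (by positivity)
  set Z := √(g - P)
  have hZ0 : 0 ≤ Z := Real.sqrt_nonneg _
  have hZ : Z ^ 2 = g - P := Real.sq_sqrt (by linarith)
  have hp0 : 0 ≤ √P := Real.sqrt_nonneg _
  have hp : √P ^ 2 = P := Real.sq_sqrt hP0
  have hgle : √g ≤ √P + Z := by
    rw [Real.sqrt_le_left (by positivity)]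
    have a1 : (√P + Z) ^ 2 = √P ^ 2 + Z ^ 2 + 2 * (√P * Z) := by ring
    rw [a1, hp, hZ]
    linarith [mul_nonneg hp0 hZ0]
  have htp : t * √P ≤ 2 * (κ * |D|) := by
    refine le_of_sq_le_sq ?_ (by positivity)
    have : (t * √P) ^ 2 = τ⁻¹ * (4 * (τ - 1) * (κ * D) ^ 2) := by rw [mul_pow, ht, hp]
    rw [this]
    have e : (2 * (κ * |D|)) ^ 2 = 4 * (κ * D) ^ 2 := by rw [mul_pow, mul_pow, mul_pow, sq_abs]; ring
    rw [e]
    have : τ⁻¹ * (τ - 1) ≤ 1 := by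
      have : τ⁻¹ * τ = 1 := inv_mul_cancel₀ (by linarith)
      have : 0 < τ⁻¹ := inv_pos.2 (by linarith)
      linarith
    have a1 := mul_le_mul_of_nonneg_right this (sq_nonneg (κ * D))
    linarith
  have hyoung : C1 * t * H * Z ≤ Z ^ 2 + C1 ^ 2 * τ⁻¹ * H ^ 2 := by
    rw [← ht]
    have a1 : C1 ^ 2 * t ^ 2 * H ^ 2 = (C1 * t * H) ^ 2 := by ring
    rw [a1]
    exact young_aux _ _
  have h1 : H * (C1 * t * √g) ≤ H * (C1 * (2 * (κ * |D|))) + Z ^ 2 + C1 ^ 2 * τ⁻¹ * H ^ 2 := by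
    have a1 : H * (C1 * t * √g) ≤ H * (C1 * t * (√P + Z)) := by gcongr
    have a2 : H * (C1 * (t * √P)) ≤ H * (C1 * (2 * (κ * |D|))) := by gcongr
    have a3 : H * (C1 * t * (√P + Z)) = H * (C1 * (t * √P)) + C1 * t * H * Z := by ring
    linarith
  have h2 : H * (C2 * w) ≤ H * (κ * (C2 * w)) := by
    have h0 : 0 ≤ C2 * w := mul_nonneg hC2 hw
    exact mul_le_mul_of_nonneg_left (le_mul_of_one_le_left h0 hκ) hH0.le
  have h3 : 0 ≤ (κ * H) * (LG - 1 / 2 * YG + c * G + 2 * C1 * |D| + (C1 + C1 ^ 2) * τ⁻¹ * G + C2 * w) := by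
    have e1 : κ ^ 2 * (2 * G * LG + 2 * (4 * (τ - 1) * D ^ 2)) = 2 * (κ * H * LG) + 2 * P := by
      rw [hP, hH]; ring
    have e2 : κ ^ 2 * (2 * G * YG) = 2 * (κ * H * YG) := by rw [hH]; ring
    have e3 : c * f = κ * H * (c * G) := by rw [hf, hH]; ring
    have e4 : H ^ 2 = κ * H * G := by rw [hH]; ring
    rw [e1] at hlap
    rw [e2, e3] at hXi
    rw [e4] at h1
    have e5 : H * (C1 * t * √g + C1 * τ⁻¹ * H) = H * (C1 * t * √g) + κ * H * (C1 * τ⁻¹ * G) := by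
      rw [mul_add]
      congr 1
      rw [hH]; ring
    rw [e5] at hE
    have e6 : (κ * H) * (LG - 1 / 2 * YG + c * G + 2 * C1 * |D| + (C1 + C1 ^ 2) * τ⁻¹ * G + C2 * w)
      = κ * H * LG - 1 / 2 * (κ * H * YG) + κ * H * (c * G) + H * (C1 * (2 * (κ * |D|)))
        + κ * H * (C1 * τ⁻¹ * G) + C1 ^ 2 * τ⁻¹ * (κ * H * G) + H * (κ * (C2 * w)) := by ring
    rw [e6]
    linarith
  have h4 : 0 < κ * H := mul_pos hκ0 hH0
  exact absurd (mul_neg_of_pos_of_neg h4 hbar) (not_lt.2 h3)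

end EW


namespace EW
section
variable {n : ℕ} {ι : Type} [Fintype ι] {k : ℕ} {c : ℝ} {u : ι → En n → ℝ}
    {B : ι → Fin n → ι → En n → ℝ} {V : ι → ι → En n → ℝ} {S : ι → En n → ℝ}

/-- The barrier function. -/
noncomputable def Gf (n : ℕ) (c K β M ε : ℝ) (y : En n) : ℝ :=
  M * (tau y ^ c - K * tau y ^ (c - 1)) + ε * Real.exp (β * tau y)

/-- Radial derivative of the barrier function. -/
noncomputable def Gd (c K β M ε τ : ℝ) : ℝ :=
  M * (c * τ ^ (c - 1) - K * (c - 1) * τ ^ (c - 2)) + ε * (β * Real.exp (β * τ))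

theorem Gf_sm (c K β M ε : ℝ) : Sm (Gf n c K β M ε) :=
  (contDiff_const.mul ((Sm.taup c).sub (contDiff_const.mul (Sm.taup _)))).add
    (contDiff_const.mul (Sm.taue β))

theorem pder_Gf (c K β M ε : ℝ) (i : Fin n) (y : En n) :
    pder i (Gf n c K β M ε) y = 2 * y i * Gd c K β M ε (tau y) := by
  unfold Gf Gd
  have s1 : Sm fun y : En n => K * tau y ^ (c - 1) := contDiff_const.mul (Sm.taup _)
  have s2 : Sm fun y : En n => tau y ^ c - K * tau y ^ (c - 1) := (Sm.taup c).sub s1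
  rw [pder_add (contDiff_const.mul s2) (contDiff_const.mul (Sm.taue β)), pder_cmul s2,
    pder_cmul (Sm.taue β), pder_sub (Sm.taup c) s1, pder_cmul (Sm.taup _), pder_taup, pder_taup,
    pder_taue, show c - 1 - 1 = c - 2 by ring]
  ring

theorem lapS_Gf (c K β M ε : ℝ) (y : En n) :
    lapS (Gf n c K β M ε) y = 2 * n * Gd c K β M ε (tau y) + 4 * (tau y - 1) *
      (M * (c * (c - 1) * tau y ^ (c - 2) - K * (c - 1) * (c - 2) * tau y ^ (c - 3))
        + ε * (β ^ 2 * Real.exp (β * tau y))) := by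
  unfold Gf Gd
  have s1 : Sm fun y : En n => K * tau y ^ (c - 1) := contDiff_const.mul (Sm.taup _)
  have s2 : Sm fun y : En n => tau y ^ c - K * tau y ^ (c - 1) := (Sm.taup c).sub s1
  rw [lapS_add (contDiff_const.mul s2) (contDiff_const.mul (Sm.taue β)), lapS_cmul s2,
    lapS_cmul (Sm.taue β), lapS_sub (Sm.taup c) s1, lapS_cmul (Sm.taup _), lapS_taup, lapS_taup,
    lapS_taue, show c - 1 - 1 = c - 2 by ring, show c - 1 - 2 = c - 3 by ring]
  ring

theorem Gf_lower {c K β M ε : ℝ} (hM : 0 ≤ M) {y : En n}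
    (hK : 2 * K ≤ tau y) :
    M * (tau y ^ c / 2) + ε * Real.exp (β * tau y) ≤ Gf n c K β M ε y := by
  unfold Gf
  have h1 : tau y ^ c = tau y * tau y ^ (c - 1) := by
    rw [Real.rpow_sub (tau_pos y), Real.rpow_one]; field_simp [(tau_pos y).ne']
  have h2 : K * tau y ^ (c - 1) ≤ tau y ^ c / 2 := by
    rw [h1]
    have := mul_le_mul_of_nonneg_right hK (taup_pos (c - 1) y).le
    linarith
  have : M * (tau y ^ c / 2) ≤ M * (tau y ^ c - K * tau y ^ (c - 1)) :=
    mul_le_mul_of_nonneg_left (by linarith) hM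
  linarith

theorem sum_coord_sq (y : En n) (d : ℝ) : ∑ i, (2 * y i * d) ^ 2 = 4 * (tau y - 1) * d ^ 2 := by
  have : ∀ i, (2 * y i * d) ^ 2 = (4 * d ^ 2) * y i ^ 2 := fun i => by ring
  simp only [this, ← Finset.mul_sum, sum_sq]
  unfold tau; ring

/-- No touching from below in the exterior region. -/
theorem Sys.no_touch (h : Sys k c u B V S) {C1 C2 K β M ε κ : ℝ} (hC1 : 0 ≤ C1) (hC2 : 0 ≤ C2)
    (hR : ∀ y, |∑ a, u a y * Rt u B V a y|
      ≤ √(fq u y) * (C1 * tau y ^ (-1 / 2 : ℝ) * √(gq u y) + C1 * tau y ^ (-1 : ℝ) * √(fq u y)))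
    (hS : ∀ y, |∑ a, u a y * S a y| ≤ √(fq u y) * (C2 * tau y ^ (c - 1)))
    (hκ : 1 ≤ κ) {y : En n} (hG : 0 < Gf n c K β M ε y)
    (heq : fq u y = (κ * Gf n c K β M ε y) ^ 2)
    (hmax : IsLocalMax (fun z => fq u z - κ ^ 2 * (Gf n c K β M ε z * Gf n c K β M ε z)) y)
    (hbar : lapS (Gf n c K β M ε) y - (tau y - 1) * Gd c K β M ε (tau y) + c * Gf n c K β M ε y
      + 2 * C1 * |Gd c K β M ε (tau y)| + (C1 + C1 ^ 2) * (tau y)⁻¹ * Gf n c K β M ε y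
      + C2 * tau y ^ (c - 1) < 0) : False := by
  have sG : Sm (Gf n c K β M ε) := Gf_sm c K β M ε
  have sF := fq_sm h.su
  have sP : Sm fun z => Gf n c K β M ε z * Gf n c K β M ε z := sG.mul sG
  obtain ⟨hd, hl⟩ := localMax_test (sF.sub (contDiff_const.mul sP)) hmax
  rw [lapS_sub sF (contDiff_const.mul sP), lapS_cmul sP, lapS_mul sG sG, lapS_fq h.su] at hl
  have hd' : ∀ i, pder i (fun z => fq u z) y
      = κ ^ 2 * (2 * Gf n c K β M ε y * (2 * y i * Gd c K β M ε (tau y))) := by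
    intro i
    have := hd i
    rw [pder_sub sF (contDiff_const.mul sP), pder_cmul sP, pder_mul sG sG, pder_Gf] at this
    linarith
  have hk := kato h.su y
  have hx := h.sum_lap y
  simp only [hd'] at hk hx
  set G := Gf n c K β M ε y
  set D := Gd c K β M ε (tau y)
  have e1 : ∑ i, (κ ^ 2 * (2 * G * (2 * y i * D))) ^ 2 = κ ^ 4 * (16 * G ^ 2 * D ^ 2 * (tau y - 1)) := by
    have : ∀ i, (κ ^ 2 * (2 * G * (2 * y i * D))) ^ 2 = (κ ^ 4 * (4 * G ^ 2)) * (2 * y i * D) ^ 2 :=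
      fun i => by ring
    simp only [this, ← Finset.mul_sum, sum_coord_sq]
    ring
  have e2 : ∑ i, y i * (κ ^ 2 * (2 * G * (2 * y i * D))) = κ ^ 2 * (2 * G * (2 * (tau y - 1) * D)) := by
    have : ∀ i, y i * (κ ^ 2 * (2 * G * (2 * y i * D))) = (κ ^ 2 * (2 * G * (2 * D))) * y i ^ 2 :=
      fun i => by ring
    simp only [this, ← Finset.mul_sum, sum_sq]
    unfold tau; ring
  have e3 : ∑ i, pder i (Gf n c K β M ε) y * pder i (Gf n c K β M ε) y = 4 * (tau y - 1) * D ^ 2 := by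
    rw [← sum_coord_sq]
    exact Finset.sum_congr rfl fun i _ => by rw [pder_Gf, sq]
  rw [e1] at hk
  rw [e2] at hx
  rw [e3] at hl
  refine touch_core (c := c) (C1 := C1) (C2 := C2) (κ := κ) (G := G) (D := D)
    (LG := lapS (Gf n c K β M ε) y) (τ := tau y) (t := tau y ^ (-1 / 2 : ℝ)) (f := fq u y)
    (g := gq u y) (Xi := ∑ a, u a y * lapS (u a) y) (YG := 2 * (tau y - 1) * D)
    (nD := ∑ a, u a y * S a y) (E1 := ∑ a, u a y * Rt u B V a y) (w := tau y ^ (c - 1))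
    hC1 hC2 hκ hG (one_le_tau y) (taup_pos _ y).le ?_ (taup_pos _ y).le heq hk ?_ hx ?_ ?_ ?_
  · rw [← Real.rpow_natCast, ← Real.rpow_mul (tau_pos y).le, ← Real.rpow_neg_one]; norm_num
  · linarith
  · have := hR y
    rw [Real.rpow_neg_one] at this
    exact (abs_le.1 this).1
  · exact (abs_le.1 (hS y)).1
  · have e : lapS (Gf n c K β M ε) y - 1 / 2 * (2 * (tau y - 1) * D)
      = lapS (Gf n c K β M ε) y - (tau y - 1) * D := by ring
    rw [e]; exact hbar

theorem isCompact_tau (T0 T1 : ℝ) : IsCompact {y : En n | T0 ≤ tau y ∧ tau y ≤ T1} := by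
  have hc : Continuous fun y : En n => tau y := Sm.stau.continuous
  refine Metric.isCompact_of_isClosed_isBounded
    ((isClosed_le continuous_const hc).inter (isClosed_le hc continuous_const)) ?_
  refine (Metric.isBounded_closedBall (x := (0 : En n)) (r := T1)).subset ?_
  rintro y ⟨_, h⟩
  rw [mem_closedBall_zero_iff]
  unfold tau at h
  nlinarith [sq_nonneg (‖y‖ - 1)]

theorem Sys.sharp (h : Sys k c u B V S) {β0 C0 : ℝ} (hβ0 : β0 < 1 / 4)
    (hcr : ∀ a y, |u a y| ≤ C0 * Real.exp (β0 * tau y)) (a : ι) : BD c (u a) := by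
  obtain ⟨C1, hC1, hR⟩ := h.Rbound
  obtain ⟨C2, hC2, hS⟩ := h.Sbound
  set β : ℝ := (max β0 0 + 1 / 4) / 2 with hβ
  have m1 := le_max_left β0 0
  have m2 := le_max_right β0 0
  have m3 : max β0 0 < 1 / 4 := max_lt hβ0 (by norm_num)
  have hβpos : 0 < β := by rw [hβ]; linarith
  have hβlt : β < 1 / 4 := by rw [hβ]; linarith
  have hββ : β0 < β := by rw [hβ]; linarith
  clear_value β
  obtain ⟨K, T0, hK0, hT1, hKT, hbar⟩ := barrier n c (C1 + C1 ^ 2 + C2) β (by positivity) hβpos hβlt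
  -- bound on the compact part
  have hcf : Continuous fun y : En n => fq u y := (fq_sm h.su).continuous
  obtain ⟨Cb, hCb⟩ := (isCompact_tau (n := n) 1 T0).exists_bound_of_continuousOn hcf.continuousOn
  have hfb : ∀ y : En n, tau y ≤ T0 → fq u y ≤ |Cb| := fun y hy =>
    (le_abs_self _).trans ((hCb y ⟨one_le_tau y, hy⟩).trans (le_abs_self _))
  have hT0pos : 0 < T0 := by linarith
  have hT0c : 0 < T0 ^ c := Real.rpow_pos_of_pos hT0pos c
  set M : ℝ := 1 + 2 * √|Cb| / T0 ^ c with hM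
  have hM1 : 1 ≤ M := by
    have : 0 ≤ 2 * √|Cb| / T0 ^ c := by positivity
    linarith
  have hMb : |Cb| ≤ (M * (T0 ^ c / 2)) ^ 2 := by
    have : √|Cb| ≤ M * (T0 ^ c / 2) := by
      have e : M * (T0 ^ c / 2) = T0 ^ c / 2 + √|Cb| := by rw [hM]; field_simp
      rw [e]; linarith
    exact (Real.sqrt_le_left (by positivity)).1 this
  -- crude bound for fq
  set N : ℝ := (Fintype.card ι : ℕ) * C0 ^ 2 with hN
  have hN0 : 0 ≤ N := by positivity
  have hfc : ∀ y, fq u y ≤ N * Real.exp (2 * β0 * tau y) := by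
    intro y
    unfold fq
    refine (Finset.sum_le_card_nsmul _ _ (C0 ^ 2 * Real.exp (2 * β0 * tau y)) fun a _ => ?_).trans ?_
    · have h2 := hcr a y
      have h3 := mul_self_le_mul_self (abs_nonneg _) h2
      rw [abs_mul_abs_self] at h3
      refine h3.trans (le_of_eq ?_)
      rw [show 2 * β0 * tau y = β0 * tau y + β0 * tau y by ring, Real.exp_add]; ring
    · simp only [Finset.card_univ, nsmul_eq_mul, hN]; apply le_of_eq; ring
  -- main comparison
  have main : ∀ ε > 0, ∀ y : En n, T0 ≤ tau y → fq u y ≤ (Gf n c K β M ε y) ^ 2 := by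
    intro ε hε y0 hy0
    by_contra hcon
    push Not at hcon
    set G := Gf n c K β M ε with hGdef
    have hGlow : ∀ y : En n, T0 ≤ tau y → M * (tau y ^ c / 2) + ε * Real.exp (β * tau y) ≤ G y :=
      fun y hy => Gf_lower (by linarith) (by linarith)
    have hG1 : ∀ y : En n, T0 ≤ tau y → M * (tau y ^ c / 2) < G y := fun y hy => by
      have := hGlow y hy
      have : 0 < ε * Real.exp (β * tau y) := by positivity
      linarith
    have hG2 : ∀ y : En n, T0 ≤ tau y → ε * Real.exp (β * tau y) < G y := fun y hy => by
      have := hGlow y hy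
      have : 0 < M * (tau y ^ c / 2) := mul_pos (by linarith) (half_pos (taup_pos c y))
      linarith
    have hGpos : ∀ y : En n, T0 ≤ tau y → 0 < G y := fun y hy =>
      lt_trans (by positivity) (hG2 y hy)
    set T1 : ℝ := N / (ε ^ 2 * (2 * (β - β0))) with hT1def
    have hfar : ∀ y : En n, T0 ≤ tau y → T1 ≤ tau y → fq u y < G y ^ 2 := by
      intro y hy hy1
      have hb : 0 < ε ^ 2 * (2 * (β - β0)) := by
        have : 0 < β - β0 := by linarith
        positivity
      have h1 : N ≤ tau y * (ε ^ 2 * (2 * (β - β0))) := (div_le_iff₀ hb).1 hy1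
      have h2 : 2 * (β - β0) * tau y ≤ Real.exp (2 * (β - β0) * tau y) := by
        have := Real.add_one_le_exp (2 * (β - β0) * tau y); linarith
      have h3 : N ≤ ε ^ 2 * Real.exp (2 * (β - β0) * tau y) := by
        have := mul_le_mul_of_nonneg_left h2 (sq_nonneg ε)
        linarith
      calc fq u y ≤ N * Real.exp (2 * β0 * tau y) := hfc y
        _ ≤ ε ^ 2 * Real.exp (2 * (β - β0) * tau y) * Real.exp (2 * β0 * tau y) :=
            mul_le_mul_of_nonneg_right h3 (Real.exp_pos _).le
        _ = (ε * Real.exp (β * tau y)) ^ 2 := by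
            rw [mul_assoc, ← Real.exp_add, mul_pow, ← Real.exp_nat_mul]
            congr 2; push_cast; ring
        _ < G y ^ 2 := by
            have : 0 < ε * Real.exp (β * tau y) := by positivity
            exact pow_lt_pow_left₀ (hG2 y hy) this.le (by norm_num)
    have hbdy : ∀ y : En n, tau y = T0 → fq u y < G y ^ 2 := by
      intro y hy
      refine ((hfb y hy.le).trans hMb).trans_lt ?_
      have := hG1 y hy.ge
      rw [hy] at this
      exact pow_lt_pow_left₀ this (by positivity) (by norm_num)
    have hy0T : tau y0 < T1 := by
      by_contra hc
      exact absurd (hfar y0 hy0 (not_lt.1 hc)) (not_lt.2 hcon.le)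
    have hcG : Continuous G := (Gf_sm c K β M ε).continuous
    have hcont : ContinuousOn (fun y => fq u y / G y ^ 2) {y : En n | T0 ≤ tau y ∧ tau y ≤ T1} :=
      hcf.continuousOn.div (hcG.pow 2).continuousOn fun y hy => (pow_pos (hGpos y hy.1) 2).ne'
    obtain ⟨y1, hy1, hmax⟩ := (isCompact_tau (n := n) T0 T1).exists_isMaxOn ⟨y0, hy0, hy0T.le⟩ hcont
    set q := fq u y1 / G y1 ^ 2 with hq
    have hq1 : 1 < q := by
      have h1 : fq u y0 / G y0 ^ 2 ≤ q := hmax (show y0 ∈ {y : En n | _} from ⟨hy0, hy0T.le⟩)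
      refine lt_of_lt_of_le ?_ h1
      rwa [one_lt_div (pow_pos (hGpos y0 hy0) 2)]
    have hG1sq : 0 < G y1 ^ 2 := pow_pos (hGpos y1 hy1.1) 2
    have hfy1 : G y1 ^ 2 < fq u y1 := (one_lt_div hG1sq).1 hq1
    have hlt0 : T0 < tau y1 := lt_of_le_of_ne hy1.1 fun he => by
      have := hbdy y1 he.symm; linarith
    have hlt1 : tau y1 < T1 := lt_of_le_of_ne hy1.2 fun he => by
      have := hfar y1 hy1.1 he.ge; linarith
    have hqpos : 0 < q := by linarith
    have hκ2 : √q ^ 2 = q := Real.sq_sqrt hqpos.le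
    have hfeq : fq u y1 = q * G y1 ^ 2 := by rw [hq, div_mul_cancel₀ _ hG1sq.ne']
    refine h.no_touch hC1 hC2 hR hS (κ := √q) (K := K) (β := β) (M := M) (ε := ε) (y := y1)
      (Real.one_le_sqrt.2 hq1.le) (hGpos y1 hy1.1) ?_ ?_ ?_
    · rw [mul_pow, hκ2]; exact hfeq
    · have hct : Continuous fun y : En n => tau y := Sm.stau.continuous
      have n1 := (isOpen_lt continuous_const hct).mem_nhds hlt0
      have n2 := (isOpen_lt hct continuous_const).mem_nhds hlt1
      filter_upwards [n1, n2] with z hz1 hz2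
      rw [hκ2, ← hGdef, ← sq, ← sq, hfeq]
      have h1 : fq u z / G z ^ 2 ≤ q := hmax (show z ∈ {y : En n | _} from ⟨hz1.le, hz2.le⟩)
      rw [div_le_iff₀ (pow_pos (hGpos z hz1.le) 2)] at h1
      linarith
    · obtain ⟨b1, b2⟩ := hbar (tau y1) hy1.1
      rw [lapS_Gf]
      set t := tau y1 with ht
      have ht0 : 0 < t := tau_pos y1
      have hti : 0 < t⁻¹ := inv_pos.2 ht0
      set x := t ^ (c - 1) with hx
      have hx0 : 0 < x := Real.rpow_pos_of_pos ht0 _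
      set e := Real.exp (β * t) with he
      have he0 : 0 < e := Real.exp_pos _
      have hGv : Gf n c K β M ε y1 = M * (t ^ c - K * x) + ε * e := rfl
      have hDv : Gd c K β M ε t = M * (c * x - K * (c - 1) * t ^ (c - 2)) + ε * (β * e) := rfl
      set d := c * x - K * (c - 1) * t ^ (c - 2) with hd
      set d2 := c * (c - 1) * t ^ (c - 2) - K * (c - 1) * (c - 2) * t ^ (c - 3) with hd2
      set g0 := t ^ c - K * x with hg0
      have hg0pos : 0 ≤ g0 := by
        have := Gf_lower (n := n) (c := c) (K := K) (β := β) (M := 1) (ε := 0) (y := y1) (by norm_num)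
          (by linarith)
        unfold Gf at this
        have h2 := taup_pos c y1
        rw [← ht] at this h2
        simp only [one_mul, zero_mul, add_zero] at this
        rw [hg0, hx]; linarith
      rw [hGv, hDv]
      have habs : |M * d + ε * (β * e)| ≤ M * |d| + ε * (β * e) := by
        refine (abs_add_le _ _).trans (le_of_eq ?_)
        rw [abs_mul, abs_of_nonneg (by linarith : (0:ℝ) ≤ M), abs_of_nonneg (by positivity : 0 ≤ ε * (β * e))]
      set A := |d| with hA
      have hA0 : 0 ≤ A := abs_nonneg _
      clear_value A d d2 g0 e x t
      have p1 := mul_neg_of_pos_of_neg (by linarith : 0 < M) b1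
      have p2 := mul_neg_of_pos_of_neg (mul_pos hε he0) b2
      have hM0 : 0 ≤ M := by linarith
      have r1 : 2 * C1 * |M * d + ε * (β * e)| ≤ 2 * C1 * (M * A + ε * (β * e)) :=
        mul_le_mul_of_nonneg_left habs (by positivity)
      have r2 : C2 * x ≤ M * (C2 * x) := le_mul_of_one_le_left (by positivity) hM1
      have r3 : 0 ≤ M * (2 * (C1 ^ 2 + C2) * A) + M * (C2 * t⁻¹ * g0) + M * ((C1 + C1 ^ 2) * x)
        + ε * e * (2 * (C1 ^ 2 + C2) * β + C2 * t⁻¹) := by positivity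
      linarith
  -- let ε tend to zero
  have main2 : ∀ y : En n, T0 ≤ tau y → √(fq u y) ≤ M * tau y ^ c := by
    intro y hy
    refine le_of_forall_pos_le_add fun δ hδ => ?_
    have hE := Real.exp_pos (β * tau y)
    have h1 := main (δ / Real.exp (β * tau y)) (by positivity) y hy
    have h2 := Gf_lower (n := n) (c := c) (K := K) (β := β) (M := M)
      (ε := δ / Real.exp (β * tau y)) (y := y) (by linarith) (by linarith)
    have h3 : 0 ≤ Gf n c K β M (δ / Real.exp (β * tau y)) y := by
      refine le_trans ?_ h2
      have := taup_pos c y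
      positivity
    have h4 := (Real.sqrt_le_left h3).2 h1
    refine h4.trans ?_
    unfold Gf
    rw [div_mul_cancel₀ _ hE.ne']
    have : 0 ≤ M * (K * tau y ^ (c - 1)) :=
      mul_nonneg (by linarith) (mul_nonneg hK0 (taup_pos _ y).le)
    linarith
  -- compact part
  have hcc : ContinuousOn (fun y : En n => √(fq u y) / tau y ^ c) {y : En n | 1 ≤ tau y ∧ tau y ≤ T0} :=
    (Real.continuous_sqrt.comp hcf).continuousOn.div (Sm.taup c).continuous.continuousOn
      fun y _ => (taup_pos c y).ne'
  obtain ⟨Cc, hCc⟩ := (isCompact_tau (n := n) 1 T0).exists_bound_of_continuousOn hcc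
  refine ⟨max M Cc, fun y => (abs_le_sqrt_fq u a y).trans ?_⟩
  rcases le_total T0 (tau y) with hy | hy
  · exact (main2 y hy).trans (mul_le_mul_of_nonneg_right (le_max_left _ _) (taup_pos c y).le)
  · have := (le_abs_self _).trans (hCc y ⟨one_le_tau y, hy⟩)
    rw [div_le_iff₀ (taup_pos c y)] at this
    exact this.trans (mul_le_mul_of_nonneg_right (le_max_right _ _) (taup_pos c y).le)

end
end EW


namespace EW

section bern
variable {n : ℕ}

/-- Cutoff `1 - |y - y0|²`. -/
noncomputable def eta (y0 : En n) (y : En n) : ℝ := 1 - ‖y - y0‖ ^ 2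

theorem eta_eq (y0 y : En n) : eta y0 y = 1 - ∑ j, (y j - y0 j) * (y j - y0 j) := by
  unfold eta; rw [← sum_sq]; simp [sq]

theorem Sm.cd (y0 : En n) (i : Fin n) : Sm (fun y : En n => y i - y0 i) :=
  (Sm.coord i).sub (Sm.cst _)

theorem pder_cd (y0 : En n) (i j : Fin n) (y : En n) :
    pder i (fun y => y j - y0 j) y = if j = i then 1 else 0 := by
  rw [pder_sub (Sm.coord j) (Sm.cst _), pder_coord, pder_cst, sub_zero]

theorem Sm.seta (y0 : En n) : Sm (fun y : En n => eta y0 y) := by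
  simp only [eta_eq]
  exact (Sm.cst 1).sub (Sm.sumf fun j => (Sm.cd y0 j).mul (Sm.cd y0 j))

theorem pder_eta (y0 : En n) (i : Fin n) (y : En n) :
    pder i (fun y => eta y0 y) y = -2 * (y i - y0 i) := by
  simp only [eta_eq]
  rw [pder_sub (Sm.cst 1) (Sm.sumf fun j => (Sm.cd y0 j).mul (Sm.cd y0 j)), pder_cst,
    pder_sum fun j => (Sm.cd y0 j).mul (Sm.cd y0 j)]
  simp only [pder_mul (Sm.cd y0 _) (Sm.cd y0 _), pder_cd]
  simp [Finset.sum_add_distrib]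
  ring

theorem Sm.seta2 (y0 : En n) : Sm (fun y : En n => eta y0 y * eta y0 y) :=
  (Sm.seta y0).mul (Sm.seta y0)

theorem pder_eta2 (y0 : En n) (i : Fin n) (y : En n) :
    pder i (fun y => eta y0 y * eta y0 y) y = -4 * eta y0 y * (y i - y0 i) := by
  rw [pder_mul (Sm.seta y0) (Sm.seta y0), pder_eta]; ring

theorem lapS_eta (y0 y : En n) : lapS (fun y => eta y0 y) y = -2 * n := by
  unfold lapS
  simp only [pder_eta, pder_cmul (Sm.cd y0 _), pder_cd]
  simp; ring

theorem lapS_eta2 (y0 y : En n) :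
    lapS (fun y => eta y0 y * eta y0 y) y = 8 * ‖y - y0‖ ^ 2 - 4 * n * eta y0 y := by
  rw [lapS_mul (Sm.seta y0) (Sm.seta y0), lapS_eta]
  simp only [pder_eta]
  have : ∑ i, (-2 * (y i - y0 i)) * (-2 * (y i - y0 i)) = 4 * ‖y - y0‖ ^ 2 := by
    rw [← sum_sq, Finset.mul_sum]
    refine Finset.sum_congr rfl fun i _ => ?_
    simp; ring
  rw [this]; ring

theorem sum_mul_coord_le (y x : En n) : |∑ i, y i * x i| ≤ ‖y‖ * ‖x‖ := by
  apply Real.abs_le_sqrt _ |>.trans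
  · rw [Real.sqrt_le_left (by positivity), mul_pow, ← sum_sq, ← sum_sq]
  · exact Finset.sum_mul_sq_le_sq_mul_sq _ _ _

theorem bernstein {f0 f1 f2 : En n → ℝ} (s0 : Sm f0) (s1 : Sm f1)
    (p0 : ∀ y, 0 ≤ f0 y) (p1 : ∀ y, 0 ≤ f1 y) (p2 : ∀ y, 0 ≤ f2 y)
    (hk : ∀ y, ∑ i, (pder i f1 y) ^ 2 ≤ 4 * f1 y * f2 y)
    (y0 : En n) {C m : ℝ} (hC : 0 ≤ C) (hm : 0 ≤ m)
    (h0 : ∀ y ∈ Metric.closedBall y0 1, f0 y ≤ m)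
    (h1 : ∀ y ∈ Metric.closedBall y0 1,
      f1 y - C * m ≤ lapS f0 y - 1 / 2 * ∑ i, y i * pder i f0 y)
    (h2 : ∀ y ∈ Metric.closedBall y0 1,
      f2 y - C * f1 y - C * m ≤ lapS f1 y - 1 / 2 * ∑ i, y i * pder i f1 y) :
    f1 y0 ≤ (1 + (C + 4 * n + 67 + 2 * ‖y0‖)) * ((C + 1) * m) := by
  set A : ℝ := C + 4 * n + 67 + 2 * ‖y0‖ with hA
  have hA0 : 0 ≤ A := by positivity
  have sQ1 : Sm (fun y => (eta y0 y * eta y0 y) * f1 y) := (Sm.seta2 y0).mul s1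
  have sQ2 : Sm (fun y => A * f0 y) := (Sm.cst A).mul s0
  set Q : En n → ℝ := fun y => (eta y0 y * eta y0 y) * f1 y + A * f0 y with hQ
  have sQ : Sm Q := sQ1.add sQ2
  obtain ⟨y1, hy1, hmax⟩ := (isCompact_closedBall y0 1).exists_isMaxOn
    ⟨y0, Metric.mem_closedBall_self zero_le_one⟩ sQ.continuous.continuousOn
  have hQ0 : f1 y0 ≤ Q y1 := by
    have h := hmax (Metric.mem_closedBall_self zero_le_one)
    have e : Q y0 = f1 y0 + A * f0 y0 := by simp [hQ, eta]
    have : 0 ≤ A * f0 y0 := mul_nonneg hA0 (p0 y0)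
    have h' : Q y0 ≤ Q y1 := h
    linarith
  refine hQ0.trans ?_
  have hCm : 0 ≤ C * m := mul_nonneg hC hm
  have hAf0 : A * f0 y1 ≤ A * m := mul_le_mul_of_nonneg_left (h0 y1 hy1) hA0
  have hd : ‖y1 - y0‖ ≤ 1 := by rwa [Metric.mem_closedBall, dist_eq_norm] at hy1
  rcases hd.lt_or_eq with hlt | heq
  · have hloc : IsLocalMax Q y1 := by
      apply hmax.isLocalMax
      apply Filter.mem_of_superset (Metric.isOpen_ball.mem_nhds (x := y1) _) Metric.ball_subset_closedBall
      rwa [Metric.mem_ball, dist_eq_norm]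
    obtain ⟨hg, hl⟩ := localMax_test sQ hloc
    have e1 : lapS Q y1 = lapS (fun y => eta y0 y * eta y0 y) y1 * f1 y1
        + 2 * (∑ i, pder i (fun y => eta y0 y * eta y0 y) y1 * pder i f1 y1)
        + (eta y0 y1 * eta y0 y1) * lapS f1 y1 + A * lapS f0 y1 := by
      rw [hQ, lapS_add sQ1 sQ2, lapS_mul (Sm.seta2 y0) s1, lapS_cmul s0]
    have e2 : ∑ i, y1 i * pder i Q y1 = (∑ i, y1 i * pder i (fun y => eta y0 y * eta y0 y) y1) * f1 y1
        + (eta y0 y1 * eta y0 y1) * ∑ i, y1 i * pder i f1 y1 + A * ∑ i, y1 i * pder i f0 y1 := by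
      rw [Finset.sum_mul, Finset.mul_sum, Finset.mul_sum, ← Finset.sum_add_distrib,
        ← Finset.sum_add_distrib]
      refine Finset.sum_congr rfl fun i _ => ?_
      rw [hQ, pder_add sQ1 sQ2, pder_mul (Sm.seta2 y0) s1, pder_cmul s0]; ring
    have e2' : ∑ i, y1 i * pder i Q y1 = 0 := by simp [hg]
    set x : En n := y1 - y0 with hx
    have hxi : ∀ i, y1 i - y0 i = x i := fun i => by simp [hx]
    set E := eta y0 y1 with hE
    have hEx : E = 1 - ‖x‖ ^ 2 := rfl
    have hE0 : 0 ≤ E := by rw [hEx]; have := pow_le_one₀ (n := 2) (norm_nonneg x) hd; linarith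
    have hE1 : E ≤ 1 := by rw [hEx]; have := sq_nonneg ‖x‖; linarith
    have e3 : ∑ i, pder i (fun y => eta y0 y * eta y0 y) y1 * pder i f1 y1
        = -4 * E * ∑ i, x i * pder i f1 y1 := by
      rw [Finset.mul_sum]
      refine Finset.sum_congr rfl fun i _ => ?_
      rw [pder_eta2, hxi]; ring
    have e4 : ∑ i, y1 i * pder i (fun y => eta y0 y * eta y0 y) y1 = -4 * E * ∑ i, y1 i * x i := by
      rw [Finset.mul_sum]
      refine Finset.sum_congr rfl fun i _ => ?_
      rw [pder_eta2, hxi]; ring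
    have e5 : lapS (fun y => eta y0 y * eta y0 y) y1 = 8 * ‖x‖ ^ 2 - 4 * n * E := lapS_eta2 y0 y1
    have b1 := h1 y1 hy1
    have b2 := h2 y1 hy1
    have hE2 : E * E ≤ 1 := mul_le_one₀ hE1 hE0 hE1
    have hE20 : 0 ≤ E * E := mul_self_nonneg E
    -- drift of the cutoff
    have b3 : -(‖y0‖ + 1) ≤ E * ∑ i, y1 i * x i := by
      have hy1n : ‖y1‖ ≤ ‖y0‖ + 1 := by
        have : y1 = y0 + x := by simp [hx]
        rw [this]; exact (norm_add_le _ _).trans (by linarith)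
      have h := sum_mul_coord_le y1 x
      have h' : ‖y1‖ * ‖x‖ ≤ ‖y0‖ + 1 :=
        (mul_le_of_le_one_right (norm_nonneg _) hd).trans hy1n
      have h3 : |E * ∑ i, y1 i * x i| ≤ ‖y0‖ + 1 := by
        rw [abs_mul, abs_of_nonneg hE0]
        exact (mul_le_of_le_one_left (abs_nonneg _) hE1).trans (h.trans h')
      exact (abs_le.1 h3).1
    have b4 : 8 * E * ∑ i, x i * pder i f1 y1 ≤ E * E * f2 y1 + 64 * f1 y1 := by
      have hs : (∑ i, x i * pder i f1 y1) ^ 2 ≤ 4 * f1 y1 * f2 y1 := by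
        refine (Finset.sum_mul_sq_le_sq_mul_sq _ _ _).trans ?_
        rw [sum_sq]
        have hp : 0 ≤ ∑ i, (pder i f1 y1) ^ 2 := Finset.sum_nonneg fun i _ => sq_nonneg _
        exact (mul_le_of_le_one_left hp (pow_le_one₀ (norm_nonneg x) hd)).trans (hk y1)
      have hnn : 0 ≤ E * E * f2 y1 + 64 * f1 y1 :=
        add_nonneg (mul_nonneg hE20 (p2 y1)) (mul_nonneg (by norm_num) (p1 y1))
      refine le_of_sq_le_sq ?_ hnn
      have q1 := mul_le_mul_of_nonneg_left hs (by positivity : 0 ≤ 64 * (E * E))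
      have q2 := sq_nonneg (E * E * f2 y1 - 64 * f1 y1)
      have q3 : (8 * E * ∑ i, x i * pder i f1 y1) ^ 2
        = 64 * (E * E) * (∑ i, x i * pder i f1 y1) ^ 2 := by ring
      rw [q3]
      have q4 : (E * E * f2 y1 + 64 * f1 y1) ^ 2
        = (E * E * f2 y1 - 64 * f1 y1) ^ 2 + 64 * (E * E) * (4 * f1 y1 * f2 y1) := by ring
      rw [q4]; linarith
    rw [e2'] at e2
    rw [e1, e3, e5] at hl
    rw [e4] at e2
    have b1' := mul_le_mul_of_nonneg_left b1 hA0
    have b2' := mul_le_mul_of_nonneg_left b2 hE20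
    have b3' := mul_le_mul_of_nonneg_right b3 (p1 y1)
    have hf1 := p1 y1
    have c1 : E * E * f1 y1 ≤ f1 y1 := mul_le_of_le_one_left hf1 hE2
    have c2 : C * (E * E * f1 y1) ≤ C * f1 y1 := mul_le_mul_of_nonneg_left c1 hC
    have c3 : E * E * (C * m) ≤ C * m := mul_le_of_le_one_left hCm hE2
    have c4 : (n : ℝ) * (E * f1 y1) ≤ n * f1 y1 :=
      mul_le_mul_of_nonneg_left (mul_le_of_le_one_left hf1 hE1) (Nat.cast_nonneg n)
    have c5 : 0 ≤ ‖x‖ ^ 2 * f1 y1 := by positivity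
    have hAf : A * f1 y1 = C * f1 y1 + 4 * (n * f1 y1) + 67 * f1 y1 + 2 * (‖y0‖ * f1 y1) := by
      rw [hA]; ring
    have key : f1 y1 ≤ (1 + A) * (C * m) := by
      clear_value E Q
      clear hA hmax sQ1 sQ2
      generalize lapS f0 y1 = l0 at *
      generalize lapS f1 y1 = l1 at *
      generalize ∑ i, y1 i * pder i f0 y1 = d0 at *
      generalize ∑ i, y1 i * pder i f1 y1 = d1 at *
      generalize ∑ i, x i * pder i f1 y1 = d2 at *
      generalize ∑ i, y1 i * x i = d3 at *
      linarith
    have hQy : Q y1 ≤ f1 y1 + A * f0 y1 := by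
      show E * E * f1 y1 + A * f0 y1 ≤ _
      linarith
    have : (1 + A) * ((C + 1) * m) = (1 + A) * (C * m) + m + A * m := by ring
    linarith
  · have : Q y1 = A * f0 y1 := by simp [hQ, eta, heq]
    rw [this]
    have e : (1 + A) * ((C + 1) * m) = A * m + m + C * m + A * (C * m) := by ring
    have := mul_nonneg hA0 hCm
    linarith

end bern
end EW


namespace EW
section
variable {n : ℕ} {ι : Type} [Fintype ι] {k : ℕ} {c : ℝ} {u : ι → En n → ℝ}
    {B : ι → Fin n → ι → En n → ℝ} {V : ι → ι → En n → ℝ} {S : ι → En n → ℝ}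

theorem rpow_le_exp {s : ℝ} (hs : 0 < s) {t : ℝ} (ht : 0 < t) :
    t ^ s ≤ Real.exp (s * Real.log (4 * s)) * Real.exp (t / 4) := by
  rw [Real.rpow_def_of_pos ht, ← Real.exp_add]
  apply Real.exp_le_exp.2
  have h := Real.log_le_sub_one_of_pos (show 0 < t / (4 * s) by positivity)
  rw [Real.log_div ht.ne' (by positivity)] at h
  have h2 := mul_le_mul_of_nonneg_left h hs.le
  have h3 : s * (t / (4 * s) - 1) = t / 4 - s := by field_simp
  rw [h3] at h2
  have h4 : s * (Real.log t - Real.log (4 * s)) = Real.log t * s - s * Real.log (4 * s) := by ring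
  linarith

theorem taup_le {p P : ℝ} (h : |p| ≤ P) {t T : ℝ} (ht : 1 ≤ t) (hT : t ≤ T) : t ^ p ≤ T ^ P :=
  (Real.rpow_le_rpow_of_exponent_le ht ((le_abs_self p).trans h)).trans
    (Real.rpow_le_rpow (by linarith) hT ((abs_nonneg p).trans h))

theorem tau_ball {y0 y : En n} (h : y ∈ Metric.closedBall y0 1) : tau y ≤ 3 * tau y0 := by
  have hd : ‖y - y0‖ ≤ 1 := by rwa [Metric.mem_closedBall, dist_eq_norm] at h
  have : ‖y‖ ≤ ‖y0‖ + 1 := by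
    have e : y = y0 + (y - y0) := by simp
    rw [e]; exact (norm_add_le _ _).trans (by linarith)
  unfold tau
  have h0 := norm_nonneg y
  nlinarith [sq_nonneg (‖y0‖ - 1)]

theorem Sys.Sbound2 (h : Sys k c u B V S) : ∃ D : ℝ, 0 ≤ D ∧ ∀ y,
    2 * |∑ a, u a y * S a y| ≤ fq u y + D * tau y ^ (2 * c - 2) := by
  obtain ⟨C, h0, hC⟩ := h.Sbound
  refine ⟨C ^ 2, by positivity, fun y => ?_⟩
  have e : tau y ^ (2 * c - 2) = (tau y ^ (c - 1)) ^ 2 := by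
    rw [← Real.rpow_natCast, ← Real.rpow_mul (tau_pos y).le]; congr 1; push_cast; ring
  have h1 := hC y
  have h2 := sq_nonneg (√(fq u y) - C * tau y ^ (c - 1))
  have h3 := Real.sq_sqrt (fq_nonneg u y)
  rw [e]
  have h4 : (√(fq u y) - C * tau y ^ (c - 1)) ^ 2
    = √(fq u y) ^ 2 + C ^ 2 * (tau y ^ (c - 1)) ^ 2 - 2 * (√(fq u y) * (C * tau y ^ (c - 1))) := by
    ring
  linarith

theorem fq_bound (hu : ∀ a, BD c (u a)) : ∃ K : ℝ, 0 ≤ K ∧ ∀ y, fq u y ≤ K * tau y ^ (2 * c) := by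
  obtain ⟨C, h0, hC⟩ := exists_unif hu
  refine ⟨Fintype.card ι * C ^ 2, by positivity, fun y => ?_⟩
  have e : tau y ^ (2 * c) = (tau y ^ c) ^ 2 := by
    rw [← Real.rpow_natCast, ← Real.rpow_mul (tau_pos y).le]; congr 1; push_cast; ring
  unfold fq
  refine (Finset.sum_le_card_nsmul _ _ (C ^ 2 * tau y ^ (2 * c)) fun a _ => ?_).trans ?_
  · rw [e, ← mul_pow, ← sq, ← sq_abs]
    exact pow_le_pow_left₀ (abs_nonneg _) (hC a y) 2
  · simp [mul_assoc]

theorem Sys.grad_crude {k' : ℕ} {c' : ℝ} {B' V' S'} (h : Sys k c u B V S)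
    (hv : Sys k' c' (dU u) B' V' S') (hu : ∀ a, BD c (u a)) :
    ∃ C0 : ℝ, ∀ p y, |dU u p y| ≤ C0 * Real.exp (1 / 8 * tau y) := by
  obtain ⟨C1, hC1, b1⟩ := h.boch
  obtain ⟨C2, hC2, b2⟩ := hv.boch
  obtain ⟨D1, hD1, d1⟩ := h.Sbound2
  obtain ⟨D2, hD2, d2⟩ := hv.Sbound2
  obtain ⟨K, hK, k1⟩ := fq_bound hu
  set P : ℝ := |2 * c| + |2 * c - 2| + |2 * c' - 2| with hP
  have hP0 : 0 ≤ P := by positivity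
  have hq1 : |2 * c| ≤ P := by
    have := abs_nonneg (2 * c - 2); have := abs_nonneg (2 * c' - 2); linarith
  have hq2 : |2 * c - 2| ≤ P := by
    have := abs_nonneg (2 * c); have := abs_nonneg (2 * c' - 2); linarith
  have hq3 : |2 * c' - 2| ≤ P := by
    have := abs_nonneg (2 * c); have := abs_nonneg (2 * c - 2); linarith
  set M : ℝ := K + D1 + D2 with hM
  have hM0 : 0 ≤ M := by positivity
  set C := C1 + C2 + 2 with hC
  have hC0 : 0 ≤ C := by positivity
  have main : ∀ y0 : En n, gq u y0 ≤ (1 + (C + 4 * n + 67 + 2 * ‖y0‖)) *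
      ((C + 1) * (M * (3 * tau y0) ^ P)) := by
    intro y0
    have hT : 0 < (3 * tau y0) ^ P := Real.rpow_pos_of_pos (by linarith [tau_pos y0]) _
    have hm : ∀ y ∈ Metric.closedBall y0 1, K * tau y ^ (2 * c) ≤ M * (3 * tau y0) ^ P ∧
        D1 * tau y ^ (2 * c - 2) ≤ M * (3 * tau y0) ^ P ∧
        D2 * tau y ^ (2 * c' - 2) ≤ M * (3 * tau y0) ^ P := by
      intro y hy
      have t1 := one_le_tau y
      have t2 := tau_ball hy
      refine ⟨mul_le_mul (by linarith) (taup_le hq1 t1 t2) (taup_pos _ y).le hM0,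
        mul_le_mul (by linarith) (taup_le hq2 t1 t2) (taup_pos _ y).le hM0,
        mul_le_mul (by linarith) (taup_le hq3 t1 t2) (taup_pos _ y).le hM0⟩
    have hm0 : 0 ≤ M * (3 * tau y0) ^ P := by positivity
    generalize M * (3 * tau y0) ^ P = m at *
    have s1 : Sm (fun y => gq u y) := by
      have := fq_sm hv.su
      simpa only [fq_dU] using this
    refine bernstein (f0 := fun y => fq u y) (f1 := fun y => gq u y) (f2 := fun y => gq (dU u) y)
      (fq_sm h.su) s1 (fq_nonneg u) (gq_nonneg u) (gq_nonneg _) ?_ y0 hC0 hm0 ?_ ?_ ?_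
    · intro y
      have := kato hv.su y
      simpa only [fq_dU] using this
    · intro y hy; exact (k1 y).trans (hm y hy).1
    · intro y hy
      refine le_trans ?_ (b1 y)
      have f0m := (k1 y).trans (hm y hy).1
      have a1 := (d1 y)
      have a2 := (hm y hy).2.1
      have a3 := mul_le_mul_of_nonneg_left f0m hC1
      have a4 := mul_nonneg hC2 hm0
      have : C * m = C1 * m + C2 * m + 2 * m := by rw [hC]; ring
      linarith
    · intro y hy
      have a0 := b2 y
      have a1 := (d2 y)
      simp only [fq_dU] at a0 a1
      refine le_trans ?_ a0
      have a2 := (hm y hy).2.2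
      have a3 := mul_nonneg hC1 (gq_nonneg u y)
      have a4 := mul_nonneg hC2 hm0
      have a5 := mul_nonneg hC1 hm0
      have a6 := gq_nonneg u y
      have e1 : C * m = C1 * m + C2 * m + 2 * m := by rw [hC]; ring
      have e2 : C * gq u y = C1 * gq u y + C2 * gq u y + 2 * gq u y := by rw [hC]; ring
      linarith
  set K1 : ℝ := (1 + (C + 4 * n + 67 + 2)) * ((C + 1) * (M * 3 ^ P)) with hK1
  have hK10 : 0 ≤ K1 := by positivity
  set K2 : ℝ := K1 * Real.exp ((P + 1) * Real.log (4 * (P + 1))) with hK2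
  have hK20 : 0 ≤ K2 := by positivity
  have main2 : ∀ y, gq u y ≤ K2 * Real.exp (tau y / 4) := by
    intro y
    have t1 := one_le_tau y
    have hn : ‖y‖ ≤ tau y := by unfold tau; nlinarith [sq_nonneg (‖y‖ - 1), norm_nonneg y]
    have a1 : 1 + (C + 4 * n + 67 + 2 * ‖y‖) ≤ (1 + (C + 4 * n + 67 + 2)) * tau y := by
      have : (1 + (C + 4 * n + 67)) * 1 ≤ (1 + (C + 4 * n + 67)) * tau y :=
        mul_le_mul_of_nonneg_left t1 (by positivity)
      linarith
    have hR : 0 ≤ (C + 1) * (M * (3 * tau y) ^ P) := by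
      have := (Real.rpow_pos_of_pos (show 0 < 3 * tau y by linarith) P).le
      positivity
    have a2 := (main y).trans (mul_le_mul_of_nonneg_right a1 hR)
    have a3 : (1 + (C + 4 * n + 67 + 2)) * tau y * ((C + 1) * (M * (3 * tau y) ^ P))
        = K1 * tau y ^ (P + 1) := by
      rw [hK1, Real.mul_rpow (by norm_num) (tau_pos y).le, Real.rpow_add (tau_pos y) P 1, Real.rpow_one]
      ring
    rw [a3] at a2
    have a4 := mul_le_mul_of_nonneg_left (rpow_le_exp (show 0 < P + 1 by linarith) (tau_pos y)) hK10
    refine a2.trans (a4.trans (le_of_eq ?_))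
    rw [hK2]; ring
  refine ⟨√K2, fun p y => ?_⟩
  have h1 : |dU u p y| ≤ √(gq u y) := abs_le_sqrt_gq u p.1 p.2 y
  refine h1.trans ((Real.sqrt_le_sqrt (main2 y)).trans (le_of_eq ?_))
  rw [Real.sqrt_mul hK20]
  congr 1
  rw [Real.sqrt_eq_iff_mul_self_eq (by positivity) (by positivity), ← Real.exp_add]
  congr 1; ring

theorem Sys.full (k : ℕ) : ∀ {ι : Type} [Fintype ι] {c : ℝ} {u : ι → En n → ℝ}
    {B : ι → Fin n → ι → En n → ℝ} {V : ι → ι → En n → ℝ} {S : ι → En n → ℝ}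
    {β0 C0 : ℝ}, Sys k c u B V S → β0 < 1 / 4 → (∀ a y, |u a y| ≤ C0 * Real.exp (β0 * tau y)) →
    ∀ a, SymK k c (u a) := by
  induction k with
  | zero => intro ι _ c u B V S β0 C0 h hb hc a; exact h.sharp hb hc a
  | succ k ih =>
    intro ι _ c u B V S β0 C0 h hb hc a
    have h1 := ih h.mono hb hc
    have h2 := h.deriv h1
    obtain ⟨C1, hC1⟩ := h.grad_crude h2 fun a => (h1 a).bd
    have h3 := ih h2 (by norm_num : (1 / 8 : ℝ) < 1 / 4) hC1
    exact ⟨(h1 a).bd, fun i => h3 (i, a)⟩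

end
end EW


namespace EW
open MeasureTheory
section mv
variable {n : ℕ} {f g : En n → ℝ}

theorem intg {g k : En n → ℝ} (hg : Continuous g) (hk : Continuous k) (hc : HasCompactSupport k) :
    Integrable (fun x => g x * k x) :=
  (hg.mul hk).integrable_of_hasCompactSupport hc.mul_left

theorem ibp {g K : En n → ℝ} (hg : Sm g) (hK : Sm K) (hc : HasCompactSupport K) (i : Fin n) :
    ∫ x, g x * pder i K x = -∫ x, pder i g x * K x := by
  have hc' : HasCompactSupport (fun x => pder i K x) := hc.fderiv_apply ℝ _
  exact integral_mul_fderiv_eq_neg_fderiv_mul_of_integrable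
    (intg (hg.pder i).continuous hK.continuous hc)
    (intg hg.continuous (hK.pder i).continuous hc')
    (intg hg.continuous hK.continuous hc)
    (fun x _ => hg.dat x) (fun x _ => hK.dat x)

/-- Bump function. -/
noncomputable def Kb (x : En n) : ℝ := expNegInvGlue (eta 0 x)
/-- Its radial derivative. -/
noncomputable def kb (x : En n) : ℝ := 2 * (((eta 0 x)⁻¹) ^ 2 * expNegInvGlue (eta 0 x))

theorem Kb_sm : Sm (fun x : En n => Kb x) :=
  (expNegInvGlue.contDiff (n := (⊤ : ℕ∞))).comp (Sm.seta 0)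

theorem kb_sm : Sm (fun x : En n => kb x) := by
  have h := (expNegInvGlue.contDiff_polynomial_eval_inv_mul (n := (⊤ : ℕ∞))
    (Polynomial.X ^ 2)).comp (Sm.seta (0 : En n))
  have h2 : Sm (fun x : En n => ((eta 0 x)⁻¹) ^ 2 * expNegInvGlue (eta 0 x)) := by
    simpa [Function.comp_def] using h
  exact (Sm.cst 2).mul h2

theorem pder_Kb (i : Fin n) (x : En n) : pder i (fun x => Kb x) x = -(x i * kb x) := by
  have h := expNegInvGlue.hasDerivAt_polynomial_eval_inv_mul 1 (eta 0 x)
  simp at h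
  have := pder_comp (f := fun x => eta 0 x) (Sm.seta 0) i x h
  unfold Kb kb
  rw [this, pder_eta]; simp; ring

theorem Kb_nonneg (x : En n) : 0 ≤ Kb x := expNegInvGlue.nonneg _
theorem kb_nonneg (x : En n) : 0 ≤ kb x := by
  have := expNegInvGlue.nonneg (eta 0 x)
  unfold kb; positivity

theorem Kb_le (x : En n) : Kb x ≤ kb x := by
  have h := expNegInvGlue.nonneg (eta 0 x)
  unfold Kb kb
  rcases le_or_gt (eta 0 x) 0 with h0 | h0
  · simp [expNegInvGlue.zero_of_nonpos h0]
  · have h1 : eta 0 x ≤ 1 := by unfold eta; linarith [sq_nonneg ‖x - 0‖]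
    have h2 : 1 ≤ (eta 0 x)⁻¹ := (one_le_inv₀ h0).2 h1
    have h3 : 1 ≤ ((eta 0 x)⁻¹) ^ 2 := one_le_pow₀ h2
    have := le_mul_of_one_le_left h h3
    linarith

theorem kb_zero {x : En n} (h : 1 ≤ ‖x‖) : kb x = 0 := by
  have : eta 0 x ≤ 0 := by
    unfold eta; rw [sub_zero]; have := one_le_pow₀ (n := 2) h; linarith
  unfold kb; rw [expNegInvGlue.zero_of_nonpos this]; simp

theorem Kb_zero {x : En n} (h : 1 ≤ ‖x‖) : Kb x = 0 :=
  le_antisymm ((Kb_le x).trans (kb_zero h).le) (Kb_nonneg x)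

theorem kb_cs : HasCompactSupport (fun x : En n => kb x) :=
  HasCompactSupport.intro (isCompact_closedBall (0 : En n) 1) fun x hx => by
    apply kb_zero
    rw [mem_closedBall_zero_iff] at hx; linarith

theorem Kb_cs : HasCompactSupport (fun x : En n => Kb x) :=
  HasCompactSupport.intro (isCompact_closedBall (0 : En n) 1) fun x hx => by
    apply Kb_zero
    rw [mem_closedBall_zero_iff] at hx; linarith

theorem kb_int_pos : 0 < ∫ x : En n, kb x := by
  refine Continuous.integral_pos_of_hasCompactSupport_nonneg_nonzero kb_sm.continuous kb_cs
    (fun x => kb_nonneg x) (x := 0) ?_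
  have : 0 < expNegInvGlue 1 := expNegInvGlue.pos_of_pos one_pos
  simp [kb, eta, this.ne']

theorem kb_bdd : ∃ M : ℝ, 0 ≤ M ∧ ∀ x : En n, kb x ≤ M := by
  obtain ⟨M, hM⟩ := kb_sm.continuous.bounded_above_of_compact_support (kb_cs (n := n))
  exact ⟨M, (norm_nonneg _).trans (hM 0), fun x => (le_abs_self _).trans (hM x)⟩

theorem Sm.scale (hf : Sm f) (y0 : En n) (s : ℝ) : Sm (fun x => f (y0 + s • x)) :=
  hf.comp (contDiff_const.add (contDiff_const_smul s))

theorem pder_scale (hf : Sm f) (y0 : En n) (s : ℝ) (i : Fin n) (x : En n) :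
    pder i (fun x => f (y0 + s • x)) x = s * pder i f (y0 + s • x) := by
  unfold pder
  have h1 : HasFDerivAt (fun x : En n => y0 + s • x) (s • ContinuousLinearMap.id ℝ (En n)) x :=
    ((hasFDerivAt_id x).const_smul s).const_add y0
  have h2 := (hf.dat (y0 + s • x)).hasFDerivAt.comp x h1
  have h3 := h2.fderiv
  simp only [Function.comp_def] at h3
  rw [h3]; simp

theorem fderiv_eq_sum (f : En n → ℝ) (y x : En n) : fderiv ℝ f y x = ∑ i, x i * pder i f y := by
  have hx : x = ∑ i, x i • EuclideanSpace.single i (1 : ℝ) := by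
    ext j
    simp [Finset.sum_apply, Pi.single_apply]
  conv_lhs => rw [hx]
  rw [map_sum]
  simp [pder]

theorem dscale (hf : Sm f) (y0 x : En n) (s : ℝ) :
    HasDerivAt (fun s => f (y0 + s • x)) (∑ i, x i * pder i f (y0 + s • x)) s := by
  have h1 : HasDerivAt (fun s : ℝ => y0 + s • x) x s := by
    simpa using ((hasDerivAt_id s).smul_const x).const_add y0
  have h2 := (hf.dat (y0 + s • x)).hasFDerivAt.comp_hasDerivAt s h1
  rw [fderiv_eq_sum] at h2
  exact h2

/-- The weighted means. -/
noncomputable def Imean (f : En n → ℝ) (y0 : En n) (s : ℝ) : ℝ := ∫ x, f (y0 + s • x) * kb x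

theorem Imean_deriv (hf : Sm f) (y0 : En n) (s : ℝ) :
    HasDerivAt (Imean f y0) (∫ x, (∑ i, x i * pder i f (y0 + s • x)) * kb x) s := by
  have hcont : Continuous fun p : ℝ × En n =>
      (∑ i, p.2 i * pder i f (y0 + p.1 • p.2)) * kb p.2 := by
    refine Continuous.mul (continuous_finsetSum _ fun i _ => ?_)
      (kb_sm.continuous.comp continuous_snd)
    exact ((Sm.coord i).continuous.comp continuous_snd).mul
      ((hf.pder i).continuous.comp
        (continuous_const.add (continuous_fst.smul continuous_snd)))
  obtain ⟨M, hM⟩ := ((isCompact_closedBall s 1).prod (isCompact_closedBall (0 : En n) 1)).exists_bound_of_continuousOn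
    hcont.continuousOn
  have h := hasDerivAt_integral_of_dominated_loc_of_deriv_le (μ := (volume : Measure (En n)))
    (F := fun s x => f (y0 + s • x) * kb x) (x₀ := s) (s := Metric.closedBall s 1)
    (F' := fun s x => (∑ i, x i * pder i f (y0 + s • x)) * kb x)
    (bound := (Metric.closedBall (0 : En n) 1).indicator fun _ => M)
    (Metric.closedBall_mem_nhds s one_pos) ?_ ?_ ?_ ?_ ?_ ?_
  · exact h.2
  · exact Filter.Eventually.of_forall fun s =>
      (intg (hf.scale y0 s).continuous kb_sm.continuous kb_cs).aestronglyMeasurable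
  · exact intg (hf.scale y0 s).continuous kb_sm.continuous kb_cs
  · exact (hcont.comp (continuous_const.prodMk continuous_id)).aestronglyMeasurable
  · refine Filter.Eventually.of_forall fun x t ht => ?_
    by_cases hx : x ∈ Metric.closedBall (0 : En n) 1
    · rw [Set.indicator_of_mem hx]
      exact hM (t, x) ⟨ht, hx⟩
    · rw [Set.indicator_of_notMem hx, kb_zero]
      · simp
      · rw [mem_closedBall_zero_iff] at hx; linarith
  · refine (integrable_indicator_iff measurableSet_closedBall).2 ?_
    exact integrableOn_const (measure_closedBall_lt_top.ne)
  · exact Filter.Eventually.of_forall fun x t _ => (dscale hf y0 x t).mul_const _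

theorem stepB (hf : Sm f) (y0 : En n) (s : ℝ) :
    ∫ x, (∑ i, x i * pder i f (y0 + s • x)) * kb x = s * ∫ x, lapS f (y0 + s • x) * Kb x := by
  have e1 : ∀ x : En n, (∑ i, x i * pder i f (y0 + s • x)) * kb x
      = ∑ i, -(pder i f (y0 + s • x) * pder i (fun x => Kb x) x) := by
    intro x
    rw [Finset.sum_mul]
    refine Finset.sum_congr rfl fun i _ => ?_
    rw [pder_Kb]; ring
  have e2 : ∀ x : En n, lapS f (y0 + s • x) * Kb x
      = ∑ i, pder i (fun z => pder i f z) (y0 + s • x) * Kb x := by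
    intro x; unfold lapS; rw [Finset.sum_mul]
  simp only [e1, e2]
  rw [integral_finsetSum, integral_finsetSum, Finset.mul_sum]
  · refine Finset.sum_congr rfl fun i _ => ?_
    rw [integral_neg, ibp ((hf.pder i).scale y0 s) Kb_sm Kb_cs i, neg_neg]
    simp only [pder_scale (hf.pder i)]
    rw [← integral_const_mul]
    congr 1; ext x; ring
  · intro i _
    exact intg ((((hf.pder i).pder i).scale y0 s).continuous) Kb_sm.continuous Kb_cs
  · intro i _
    have hc' : HasCompactSupport (fun x : En n => pder i (fun x => Kb x) x) := Kb_cs.fderiv_apply ℝ _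
    exact (intg (((hf.pder i).scale y0 s).continuous) (Kb_sm.pder i).continuous hc').neg

theorem stepC (hf : Sm f) (y0 : En n) (s : ℝ) :
    s * ∫ x, (∑ i, (y0 + s • x) i * pder i f (y0 + s • x)) * Kb x
      = -∫ x, f (y0 + s • x) * (n * s * Kb x - (∑ i, (y0 + s • x) i * x i) * kb x) := by
  have sl : ∀ i, Sm (fun x : En n => (y0 + s • x) i) := fun i => (Sm.coord i).scale y0 s
  have hK : ∀ i, Sm (fun x : En n => (y0 + s • x) i * Kb x) := fun i => (sl i).mul Kb_sm
  have hKc : ∀ i, HasCompactSupport (fun x : En n => (y0 + s • x) i * Kb x) := fun i => Kb_cs.mul_left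
  have hp : ∀ i (x : En n), pder i (fun x : En n => (y0 + s • x) i * Kb x) x
      = s * Kb x - (y0 + s • x) i * x i * kb x := by
    intro i x
    rw [pder_mul (sl i) Kb_sm, pder_Kb, pder_scale (f := fun y => y i) (Sm.coord i), pder_coord]
    simp; ring
  have e1 : ∀ x : En n, (∑ i, (y0 + s • x) i * pder i f (y0 + s • x)) * Kb x
      = ∑ i, pder i f (y0 + s • x) * ((y0 + s • x) i * Kb x) := by
    intro x; rw [Finset.sum_mul]; exact Finset.sum_congr rfl fun i _ => by ring
  have e2 : ∀ x : En n, f (y0 + s • x) * (n * s * Kb x - (∑ i, (y0 + s • x) i * x i) * kb x)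
      = ∑ i, f (y0 + s • x) * pder i (fun x : En n => (y0 + s • x) i * Kb x) x := by
    intro x
    simp only [hp]
    rw [← Finset.mul_sum, Finset.sum_sub_distrib, Finset.sum_mul]
    simp; ring_nf; tauto
  simp only [e1, e2]
  rw [integral_finsetSum, integral_finsetSum, Finset.mul_sum, ← Finset.sum_neg_distrib]
  · refine Finset.sum_congr rfl fun i _ => ?_
    rw [ibp (hf.scale y0 s) (hK i) (hKc i) i, neg_neg, ← integral_const_mul]
    simp only [pder_scale hf]
    congr 1; ext x; ring
  · intro i _
    exact intg (hf.scale y0 s).continuous ((hK i).pder i).continuous ((hKc i).fderiv_apply ℝ _)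
  · intro i _
    exact intg ((hf.pder i).scale y0 s).continuous (hK i).continuous (hKc i)

theorem stepD (hf : Sm f) (f0 : ∀ y, 0 ≤ f y) {C : ℝ} (hC : 0 ≤ C)
    (hL : ∀ y, -(C * f y) ≤ lapS f y - 1 / 2 * ∑ i, y i * pder i f y) (y0 : En n) {s : ℝ}
    (hs0 : 0 ≤ s) (hs1 : s ≤ 1) :
    -((C + (n + (‖y0‖ + 1)) / 2) * Imean f y0 s)
      ≤ ∫ x, (∑ i, x i * pder i f (y0 + s • x)) * kb x := by
  rw [stepB hf]
  have sd : Sm (fun y => ∑ i, y i * pder i f y) := Sm.sumf fun i => (Sm.coord i).mul (hf.pder i)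
  have i1 := intg (hf.scale y0 s).continuous Kb_sm.continuous Kb_cs
  have i2 := intg (sd.scale y0 s).continuous Kb_sm.continuous Kb_cs
  have i3 := intg (hf.lapS.scale y0 s).continuous Kb_sm.continuous Kb_cs
  have i4 := intg (hf.scale y0 s).continuous kb_sm.continuous kb_cs
  have h1 : -(C * ∫ x, f (y0 + s • x) * Kb x)
      + 1 / 2 * ∫ x, (∑ i, (y0 + s • x) i * pder i f (y0 + s • x)) * Kb x
      ≤ ∫ x, lapS f (y0 + s • x) * Kb x := by
    have i1' : Integrable (fun x => -(C * (f (y0 + s • x) * Kb x))) := (i1.const_mul C).neg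
    rw [← integral_const_mul, ← integral_const_mul, ← integral_neg,
      ← integral_add i1' (i2.const_mul _)]
    refine integral_mono (i1'.add (i2.const_mul _)) i3 fun x => ?_
    have := mul_le_mul_of_nonneg_right (hL (y0 + s • x)) (Kb_nonneg x)
    simp only [Pi.add_apply]
    linarith
  have h2 := mul_le_mul_of_nonneg_left h1 hs0
  have h3 := stepC hf y0 s
  have h4 : ∫ x, f (y0 + s • x) * (n * s * Kb x - (∑ i, (y0 + s • x) i * x i) * kb x)
      ≤ (n + (‖y0‖ + 1)) * Imean f y0 s := by
    unfold Imean
    rw [← integral_const_mul]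
    have sdot : Sm (fun x : En n => ∑ i, (y0 + s • x) i * x i) :=
      Sm.sumf fun i => ((Sm.coord i).scale y0 s).mul (Sm.coord i)
    refine integral_mono ?_ (i4.const_mul _) fun x => ?_
    · have a := (i1.const_mul (n * s)).sub
        (intg ((hf.scale y0 s).mul sdot).continuous kb_sm.continuous kb_cs)
      refine a.congr (Filter.Eventually.of_forall fun x => ?_)
      simp only [Pi.sub_apply]; ring
    · have b1 : (n : ℝ) * s * Kb x ≤ n * kb x := by
        rw [mul_assoc]
        refine mul_le_mul_of_nonneg_left ?_ (Nat.cast_nonneg n)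
        exact (mul_le_of_le_one_left (Kb_nonneg x) hs1).trans (Kb_le x)
      have b2 : -((∑ i, (y0 + s • x) i * x i) * kb x) ≤ (‖y0‖ + 1) * kb x := by
        rcases le_or_gt 1 ‖x‖ with hx | hx
        · simp [kb_zero hx]
        · rw [← neg_mul]
          refine mul_le_mul_of_nonneg_right ?_ (kb_nonneg x)
          have q := (abs_le.1 (sum_mul_coord_le (y0 + s • x) x)).1
          have q1 : ‖y0 + s • x‖ ≤ ‖y0‖ + 1 := by
            refine (norm_add_le _ _).trans ?_
            rw [norm_smul, Real.norm_of_nonneg hs0]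
            have := mul_le_one₀ hs1 (norm_nonneg x) hx.le
            linarith
          have q2 : ‖y0 + s • x‖ * ‖x‖ ≤ ‖y0‖ + 1 :=
            (mul_le_of_le_one_right (norm_nonneg _) hx.le).trans q1
          linarith
      show f (y0 + s • x) * _ ≤ (n + (‖y0‖ + 1)) * (f (y0 + s • x) * kb x)
      have := mul_le_mul_of_nonneg_left (show (n : ℝ) * s * Kb x - (∑ i, (y0 + s • x) i * x i) * kb x
        ≤ (n + (‖y0‖ + 1)) * kb x by linarith) (f0 (y0 + s • x))
      linarith
  have h5 : ∫ x, f (y0 + s • x) * Kb x ≤ Imean f y0 s :=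
    integral_mono i1 i4 fun x => mul_le_mul_of_nonneg_left (Kb_le x) (f0 _)
  have h50 : 0 ≤ ∫ x, f (y0 + s • x) * Kb x :=
    integral_nonneg fun x => mul_nonneg (f0 _) (Kb_nonneg x)
  have h6 : s * (C * ∫ x, f (y0 + s • x) * Kb x) ≤ C * Imean f y0 s :=
    (mul_le_of_le_one_left (mul_nonneg hC h50) hs1).trans (mul_le_mul_of_nonneg_left h5 hC)
  linarith

theorem mean_value (hf : Sm f) (f0 : ∀ y, 0 ≤ f y) {C : ℝ} (hC : 0 ≤ C)
    (hL : ∀ y, -(C * f y) ≤ lapS f y - 1 / 2 * ∑ i, y i * pder i f y) (y0 : En n) :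
    f y0 * (∫ x : En n, kb x) ≤ Real.exp (C + (n + (‖y0‖ + 1)) / 2) * ∫ x, f (y0 + x) * kb x := by
  set A := C + (n + (‖y0‖ + 1)) / 2 with hA
  have hd : ∀ s, HasDerivAt (fun s => Real.exp (A * s) * Imean f y0 s)
      (Real.exp (A * s) * A * Imean f y0 s
        + Real.exp (A * s) * ∫ x, (∑ i, x i * pder i f (y0 + s • x)) * kb x) s := by
    intro s
    refine HasDerivAt.mul ?_ (Imean_deriv hf y0 s)
    have := ((hasDerivAt_id s).const_mul A).exp
    simpa using this
  have hm : MonotoneOn (fun s => Real.exp (A * s) * Imean f y0 s) (Set.Icc 0 1) := by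
    refine monotoneOn_of_deriv_nonneg (convex_Icc 0 1)
      (fun s _ => (hd s).continuousAt.continuousWithinAt)
      (fun s _ => (hd s).differentiableAt.differentiableWithinAt) fun s hs => ?_
    rw [interior_Icc] at hs
    rw [(hd s).deriv, mul_assoc, ← mul_add]
    have := stepD hf f0 hC hL y0 hs.1.le hs.2.le
    rw [← hA] at this
    exact mul_nonneg (Real.exp_pos _).le (by linarith)
  have := hm (Set.left_mem_Icc.2 zero_le_one) (Set.right_mem_Icc.2 zero_le_one) zero_le_one
  simp only [Imean] at this
  simpa [integral_const_mul] using this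

end mv
end EW


namespace EW
open MeasureTheory
section crude
variable {n : ℕ}

theorem crude {f : En n → ℝ} (hf : Sm f) (f0 : ∀ y, 0 ≤ f y) {C : ℝ} (hC : 0 ≤ C)
    (hL : ∀ y, -(C * f y) ≤ lapS f y - 1 / 2 * ∑ i, y i * pder i f y)
    (hi : Integrable (fun y => f y * gauss y)) :
    ∃ C0 : ℝ, 0 ≤ C0 ∧ ∀ y, f y ≤ C0 * Real.exp (3 / 8 * tau y) := by
  obtain ⟨M, hM0, hM⟩ := kb_bdd (n := n)
  have hI := kb_int_pos (n := n)
  set I0 := ∫ x : En n, kb x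
  set J := ∫ y, f y * gauss y with hJ
  have gp : ∀ y : En n, 0 < gauss y := fun y => Real.exp_pos _
  have hJ0 : 0 ≤ J := integral_nonneg fun y => mul_nonneg (f0 y) (gp y).le
  refine ⟨Real.exp (C + n / 2 + 3) * (M * J) / I0, by positivity, fun y => ?_⟩
  rw [div_mul_eq_mul_div, le_div_iff₀ hI]
  refine (mean_value hf f0 hC hL y).trans ?_
  have h1 : ∫ x, f (y + x) * kb x ≤ ∫ x, (M * Real.exp ((‖y‖ + 1) ^ 2 / 4)) * (f (y + x) * gauss (y + x)) := by
    have hi' : Integrable (fun x => f (y + x) * gauss (y + x)) := hi.comp_add_left y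
    have i4 : Integrable (fun x => f (y + x) * kb x) := by
      have := intg (hf.scale y 1).continuous kb_sm.continuous kb_cs
      simpa using this
    refine integral_mono i4 (hi'.const_mul _) fun x => ?_
    rcases le_or_gt 1 ‖x‖ with hx | hx
    · show f (y + x) * kb x ≤ _
      rw [kb_zero hx, mul_zero]
      have := f0 (y + x); have := (gp (y + x)).le
      positivity
    · show f (y + x) * kb x ≤ M * Real.exp ((‖y‖ + 1) ^ 2 / 4) * (f (y + x) * gauss (y + x))
      have q1 : ‖y + x‖ ≤ ‖y‖ + 1 := (norm_add_le _ _).trans (by linarith)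
      have q2 : ‖y + x‖ ^ 2 ≤ (‖y‖ + 1) ^ 2 := pow_le_pow_left₀ (norm_nonneg _) q1 2
      have q3 : 1 ≤ Real.exp ((‖y‖ + 1) ^ 2 / 4) * gauss (y + x) := by
        unfold gauss
        rw [← Real.exp_add]
        apply Real.one_le_exp; linarith
      have q4 : kb x ≤ M * (Real.exp ((‖y‖ + 1) ^ 2 / 4) * gauss (y + x)) :=
        (hM x).trans (le_mul_of_one_le_right hM0 q3)
      have := mul_le_mul_of_nonneg_left q4 (f0 (y + x))
      linarith
  rw [integral_const_mul, integral_add_left_eq_self (fun x => f x * gauss x) y, ← hJ] at h1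
  refine (mul_le_mul_of_nonneg_left h1 (Real.exp_pos _).le).trans ?_
  have e1 : Real.exp (C + (n + (‖y‖ + 1)) / 2) * (M * Real.exp ((‖y‖ + 1) ^ 2 / 4) * J)
      = Real.exp (C + (n + (‖y‖ + 1)) / 2 + (‖y‖ + 1) ^ 2 / 4) * (M * J) := by
    rw [Real.exp_add _ ((‖y‖ + 1) ^ 2 / 4)]; ring
  have e2 : Real.exp (C + n / 2 + 3) * (M * J) * Real.exp (3 / 8 * tau y)
      = Real.exp (C + n / 2 + 3 + 3 / 8 * tau y) * (M * J) := by
    rw [Real.exp_add _ (3 / 8 * tau y)]; ring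
  rw [e1, e2]
  refine mul_le_mul_of_nonneg_right (Real.exp_le_exp.2 ?_) (by positivity)
  unfold tau
  nlinarith [sq_nonneg (‖y‖ - 4)]

variable {ι : Type} [Fintype ι] {k : ℕ} {c : ℝ} {u : ι → En n → ℝ}
    {B : ι → Fin n → ι → En n → ℝ} {V : ι → ι → En n → ℝ}

theorem Sys.crude (h : Sys k c u B V (fun _ _ => 0))
    (hi : Integrable (fun y => fq u y * gauss y)) :
    ∃ C0 : ℝ, ∀ a y, |u a y| ≤ C0 * Real.exp (3 / 16 * tau y) := by
  obtain ⟨C, hC, hb⟩ := h.boch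
  have hL : ∀ y, -(C * fq u y) ≤ lapS (fun y => fq u y) y
      - 1 / 2 * ∑ i, y i * pder i (fun y => fq u y) y := by
    intro y
    have h1 := hb y
    have h2 := gq_nonneg u y
    simp only [mul_zero, Finset.sum_const_zero, abs_zero] at h1
    linarith
  obtain ⟨C0, h0, hC0⟩ := EW.crude (fq_sm h.su) (fq_nonneg u) hC hL hi
  refine ⟨√C0, fun a y => ?_⟩
  refine (abs_le_sqrt_fq u a y).trans ((Real.sqrt_le_sqrt (hC0 y)).trans (le_of_eq ?_))
  rw [Real.sqrt_mul h0]
  congr 1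
  rw [Real.sqrt_eq_iff_mul_self_eq (by positivity) (by positivity), ← Real.exp_add]
  congr 1; ring

end crude
end EW


namespace EW
open MeasureTheory
section assembly
variable {n : ℕ}

theorem aC_pos (hn : 5 ≤ n) : 0 < aC n := by
  have : (5 : ℝ) ≤ n := by exact_mod_cast hn
  unfold aC
  have h1 : 0 < √((n : ℝ) - 2) := Real.sqrt_pos.2 (by linarith)
  positivity

theorem bC_pos (hn : 5 ≤ n) (hn' : n ≤ 9) : 0 < bC n := by
  have h1 : (5 : ℝ) ≤ n := by exact_mod_cast hn
  have h2 : (n : ℝ) ≤ 9 := by exact_mod_cast hn'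
  unfold bC
  have h3 : √(2 * (n : ℝ) - 4) < (6 * n - 12) / (n + 2) := by
    rw [Real.sqrt_lt' (by apply div_pos <;> linarith), div_pow, lt_div_iff₀ (by positivity)]
    have : 0 < (n - 2 : ℝ) * ((n - 4) * (10 - n)) := by
      apply mul_pos (by linarith) (mul_pos (by linarith) (by linarith))
    nlinarith
  rw [lt_div_iff₀ (by positivity)] at h3
  nlinarith

/-- Matrix of `X ↦ [A, X]`. -/
def adm (A : Mat n) (p q : Fin n × Fin n) : ℝ :=
  (if q.2 = p.2 then A p.1 q.1 else 0) - (if q.1 = p.1 then A q.2 p.2 else 0)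

theorem brkt_adm (A X : Mat n) (p : Fin n × Fin n) :
    brkt A X p.1 p.2 = ∑ q, adm A p q * X q.1 q.2 := by
  unfold brkt adm
  simp only [sub_mul, Finset.sum_sub_distrib, Fintype.sum_prod_type]
  congr 1
  · refine Finset.sum_congr rfl fun k _ => ?_
    simp
  · rw [Finset.sum_comm]
    refine Finset.sum_congr rfl fun k _ => ?_
    simp [mul_comm]

theorem brkt_swap (A X : Mat n) (μ ν : Fin n) : brkt X A μ ν = -brkt A X μ ν := by
  unfold brkt
  rw [← Finset.sum_neg_distrib]
  exact Finset.sum_congr rfl fun k _ => by ring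

/-- Smooth symbol. -/
def SS (k : ℕ) (p : ℝ) (f : En n → ℝ) : Prop := Sm f ∧ SymK k p f

theorem SS.zero (k : ℕ) (p : ℝ) : SS k p (fun _ : En n => (0 : ℝ)) := ⟨Sm.cst 0, SymK.zero k p⟩
theorem SS.add {k p} {f g : En n → ℝ} (hf : SS k p f) (hg : SS k p g) : SS k p (fun y => f y + g y) :=
  ⟨hf.1.add hg.1, SymK.add hf.1 hg.1 hf.2 hg.2⟩
theorem SS.sub {k p} {f g : En n → ℝ} (hf : SS k p f) (hg : SS k p g) : SS k p (fun y => f y - g y) :=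
  ⟨hf.1.sub hg.1, SymK.sub hf.1 hg.1 hf.2 hg.2⟩
theorem SS.mul {k p q} {f g : En n → ℝ} (hf : SS k p f) (hg : SS k q g) :
    SS k (p + q) (fun y => f y * g y) :=
  ⟨hf.1.mul hg.1, SymK.mul hf.1 hg.1 hf.2 hg.2⟩
theorem SS.cmul {k p} {f : En n → ℝ} (c : ℝ) (hf : SS k p f) : SS k p (fun y => c * f y) :=
  ⟨(Sm.cst c).mul hf.1, SymK.cmul c hf.1 hf.2⟩
theorem SS.sumf {k p} {κ : Type*} [Fintype κ] {u : κ → En n → ℝ} (h : ∀ a, SS k p (u a)) :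
    SS k p (fun y => ∑ a, u a y) :=
  ⟨Sm.sumf fun a => (h a).1, SymK.sumf _ (fun a => (h a).1) fun a => (h a).2⟩
theorem SS.ite {k p} {P : Prop} [Decidable P] {f : En n → ℝ} (hf : SS k p f) :
    SS k p (fun y => if P then f y else 0) := by
  by_cases h : P
  · simpa [h] using hf
  · simpa [h] using SS.zero k p

theorem SS.adm {k p} {A : En n → Mat n} (hA : ∀ μ ν, SS k p (fun y => A y μ ν))
    (a b : Fin n × Fin n) : SS k p (fun y => adm (A y) a b) := by
  unfold EW.adm
  exact (hA _ _).ite.sub (hA _ _).ite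

theorem SS.W (hn : 5 ≤ n) (hn' : n ≤ 9) (k : ℕ) (i μ ν : Fin n) :
    SS k (-1 / 2) (fun y : En n => Wc i y μ ν) := by
  have ha := aC_pos hn
  have hb := bC_pos hn hn'
  have h1 : SS k (-1) (fun y : En n => (aC n * ‖y‖ ^ 2 + bC n)⁻¹) :=
    ⟨(((Sm.cst _).mul Sm.nsq).add (Sm.cst _)).inv fun y => by positivity, SymK.inv k ha hb⟩
  have hc : ∀ i : Fin n, SS k (1 / 2) (fun y : En n => y i) := fun i => ⟨Sm.coord i, SymK.coord k i⟩
  have h2 : SS k (1 / 2) (fun y : En n => sigmaM i y μ ν) := (hc μ).ite.sub (hc ν).ite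
  have h3 := h2.mul h1
  have e : (1 / 2 + -1 : ℝ) = -1 / 2 := by norm_num
  rw [e] at h3
  simpa only [Wc, div_eq_mul_inv] using h3

theorem SS.F (hn : 5 ≤ n) (hn' : n ≤ 9) (k : ℕ) (i j μ ν : Fin n) :
    SS k (-1) (fun y : En n => Fc i j y μ ν) := by
  have e : (-1 / 2 - 1 / 2 : ℝ) = -1 := by norm_num
  have e' : (-1 / 2 + -1 / 2 : ℝ) = -1 := by norm_num
  have hd : ∀ i j, SS k (-1) (fun y : En n => pderM i (Wc j) y μ ν) := by
    intro i j
    have := SS.W hn hn' (k + 1) j μ ν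
    refine ⟨this.1.pder i, ?_⟩
    have h2 := this.2.2 i
    rwa [e] at h2
  have hb : SS k (-1) (fun y : En n => brkt (Wc i y) (Wc j y) μ ν) := by
    unfold brkt
    refine SS.sumf fun l => ?_
    have h1 := (SS.W hn hn' k i μ l).mul (SS.W hn hn' k j l ν)
    have h2 := (SS.W hn hn' k j μ l).mul (SS.W hn hn' k i l ν)
    rw [e'] at h1 h2
    exact h1.sub h2
  exact ((hd i j).sub (hd j i)).add hb

/-- First order coefficients of the eigenvalue system. -/
noncomputable def B0 (a : Fin n × Fin n × Fin n) (i : Fin n) (b : Fin n × Fin n × Fin n) (y : En n) : ℝ :=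
  if b.1 = a.1 then (-2) * adm (Wc i y) a.2 b.2 else 0

/-- Zeroth order coefficients of the eigenvalue system. -/
noncomputable def V0 (a : Fin n × Fin n × Fin n) (b : Fin n × Fin n × Fin n) (y : En n) : ℝ :=
  (if b.1 = a.1 then (-1) * ∑ i, ∑ r, adm (Wc i y) a.2 r * adm (Wc i y) r b.2 else 0)
    + 2 * adm (Fc b.1 a.1 y) a.2 b.2

theorem comp_sm {ξ : En n → Fin n → Mat n} (hs : ContDiff ℝ (⊤ : ℕ∞) ξ) (j μ ν : Fin n) :
    Sm (fun y => ξ y j μ ν) := by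
  have h1 := contDiff_pi.1 hs j
  have h2 := contDiff_pi.1 h1 μ
  exact contDiff_pi.1 h2 ν

theorem eig_sys (hn : 5 ≤ n) (hn' : n ≤ 9) (k : ℕ) (lam : ℝ) (ξ : En n → Fin n → Mat n)
    (hs : ContDiff ℝ (⊤ : ℕ∞) ξ)
    (heig : ∀ (y : En n) (j : Fin n), Lop ξ y j = (-lam) • ξ y j) :
    Sys k (lam - 1 / 2) (fun a : Fin n × Fin n × Fin n => fun y => ξ y a.1 a.2.1 a.2.2)
      B0 V0 (fun _ _ => 0) := by
  have hB : ∀ a i b, SS k (-1 / 2) (B0 (n := n) a i b) := fun a i b =>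
    ((SS.adm (fun μ ν => SS.W hn hn' k i μ ν) a.2 b.2).cmul (-2)).ite
  have hV : ∀ a b, SS k (-1) (V0 (n := n) a b) := by
    intro a b
    have e' : (-1 / 2 + -1 / 2 : ℝ) = -1 := by norm_num
    refine SS.add (SS.ite (SS.cmul (-1) (SS.sumf fun i => SS.sumf fun r => ?_))) (SS.cmul 2 ?_)
    · have := (SS.adm (fun μ ν => SS.W hn hn' k i μ ν) a.2 r).mul
        (SS.adm (fun μ ν => SS.W hn hn' k i μ ν) r b.2)
      rwa [e'] at this
    · exact SS.adm (fun μ ν => SS.F hn hn' k b.1 a.1 μ ν) a.2 b.2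
  refine ⟨fun a => comp_sm hs _ _ _, fun a i b => (hB a i b).1, fun a b => (hV a b).1,
    fun a => Sm.cst 0, fun a i b => (hB a i b).2, fun a b => (hV a b).2, fun a => SymK.zero _ _, ?_⟩
  rintro ⟨j, p⟩ y
  have h := congrFun (congrFun (heig y j) p.1) p.2
  simp only [Lop, Pi.add_apply, Pi.sub_apply, Pi.smul_apply, Finset.sum_apply, smul_eq_mul] at h
  have e1 : ∀ i, brkt (Wc i y) (pderM i (fun z => ξ z j) y) p.1 p.2
      = ∑ q, adm (Wc i y) p q * pder i (fun z => ξ z j q.1 q.2) y := fun i => brkt_adm _ _ p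
  have e2 : ∀ i, brkt (Wc i y) (brkt (Wc i y) (ξ y j)) p.1 p.2
      = ∑ q : Fin n × Fin n, (∑ r, adm (Wc i y) p r * adm (Wc i y) r q) * ξ y j q.1 q.2 := by
    intro i
    rw [brkt_adm]
    simp only [brkt_adm, Finset.mul_sum, Finset.sum_mul]
    rw [Finset.sum_comm]
    exact Finset.sum_congr rfl fun _ _ => Finset.sum_congr rfl fun _ _ => by ring
  have e3 : ∀ i, brkt (ξ y i) (Fc i j y) p.1 p.2 = -∑ q, adm (Fc i j y) p q * ξ y i q.1 q.2 := by
    intro i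
    rw [brkt_swap, brkt_adm]
  simp only [e1, e2, e3] at h
  have r1 : ∑ i, ∑ b : Fin n × Fin n × Fin n, B0 (j, p) i b y * pder i (fun y => ξ y b.1 b.2.1 b.2.2) y
      = -(2 * ∑ i, ∑ q, adm (Wc i y) p q * pder i (fun z => ξ z j q.1 q.2) y) := by
    rw [Finset.mul_sum, ← Finset.sum_neg_distrib]
    refine Finset.sum_congr rfl fun i _ => ?_
    rw [Fintype.sum_prod_type, Finset.sum_eq_single j]
    · simp only [B0, if_true]
      rw [Finset.mul_sum, ← Finset.sum_neg_distrib]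
      exact Finset.sum_congr rfl fun q _ => by ring
    · intro b _ hb
      simp [B0, hb]
    · simp
  have r2 : ∑ b : Fin n × Fin n × Fin n, V0 (j, p) b y * ξ y b.1 b.2.1 b.2.2
      = -(∑ i, ∑ q : Fin n × Fin n, (∑ r, adm (Wc i y) p r * adm (Wc i y) r q) * ξ y j q.1 q.2)
        + 2 * ∑ i, ∑ q, adm (Fc i j y) p q * ξ y i q.1 q.2 := by
    simp only [V0, add_mul, Finset.sum_add_distrib]
    congr 1
    · rw [Fintype.sum_prod_type, Finset.sum_eq_single j]
      · simp only [if_true]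
        rw [Finset.sum_comm, ← Finset.sum_neg_distrib]
        refine Finset.sum_congr rfl fun q _ => ?_
        rw [neg_one_mul, neg_mul, Finset.sum_mul]
      · intro b _ hb
        simp [hb]
      · simp
    · rw [Fintype.sum_prod_type, Finset.mul_sum]
      refine Finset.sum_congr rfl fun i _ => ?_
      rw [Finset.mul_sum]
      exact Finset.sum_congr rfl fun q _ => by ring
  rw [r1, r2]
  simp only [Finset.sum_neg_distrib, lapM, pderM] at h
  show lapS (fun z => ξ z j p.1 p.2) y
    - 1 / 2 * ∑ i, y i * pder i (fun z => ξ z j p.1 p.2) y + (lam - 1 / 2) * ξ y j p.1 p.2 = _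
  linarith

theorem tnormSq_eq (ξ : En n → Fin n → Mat n) (y : En n) :
    tnormSq (ξ y) = fq (fun a : Fin n × Fin n × Fin n => fun y => ξ y a.1 a.2.1 a.2.2) y := by
  unfold tnormSq fq fipE
  simp only [Fintype.sum_prod_type]

theorem fipE_nonneg (A : Mat n) : 0 ≤ fipE A A :=
  Finset.sum_nonneg fun _ _ => Finset.sum_nonneg fun _ _ => mul_self_nonneg _

theorem eig_sym (hn : 5 ≤ n) (hn' : n ≤ 9) (k : ℕ) (lam : ℝ) (ξ : En n → Fin n → Mat n)
    (hs : ContDiff ℝ (⊤ : ℕ∞) ξ)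
    (heig : ∀ (y : En n) (j : Fin n), Lop ξ y j = (-lam) • ξ y j)
    (hint : Integrable (fun y : En n =>
      (tnormSq (ξ y) +
        ∑ i, ∑ j, fipE (pderM i (fun z => ξ z j) y) (pderM i (fun z => ξ z j) y)) * gauss y))
    (j μ ν : Fin n) : SymK k (lam - 1 / 2) (fun y => ξ y j μ ν) := by
  have h := eig_sys hn hn' k lam ξ hs heig
  have hi : Integrable (fun y => fq (fun a : Fin n × Fin n × Fin n => fun y => ξ y a.1 a.2.1 a.2.2) y
      * gauss y) := by
    refine hint.mono' ?_ (Filter.Eventually.of_forall fun y => ?_)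
    · have g : Continuous (fun y : En n => gauss y) := by unfold gauss; fun_prop
      exact ((fq_sm h.su).continuous.mul g).aestronglyMeasurable
    · have g : 0 ≤ gauss y := (Real.exp_pos _).le
      rw [Real.norm_of_nonneg (mul_nonneg (fq_nonneg _ y) g), ← tnormSq_eq]
      refine mul_le_mul_of_nonneg_right ?_ g
      have : 0 ≤ ∑ i, ∑ j, fipE (pderM i (fun z => ξ z j) y) (pderM i (fun z => ξ z j) y) :=
        Finset.sum_nonneg fun _ _ => Finset.sum_nonneg fun _ _ => fipE_nonneg _
      linarith
  obtain ⟨C0, hC0⟩ := h.crude hi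
  exact Sys.full k h (by norm_num) hC0 (j, μ, ν)

end assembly
end EW


namespace EW
section final
variable {n : ℕ}

theorem norm_iter_sum {κ E : Type*} [Fintype κ] [NormedAddCommGroup E] [NormedSpace ℝ E]
    {g : κ → En n → ℝ} (hg : ∀ a, Sm (g a)) (v : κ → E) (m : ℕ) (y : En n) :
    ‖iteratedFDeriv ℝ m (fun y => ∑ a, g a y • v a) y‖
      ≤ ∑ a, ‖v a‖ * ‖iteratedFDeriv ℝ m (g a) y‖ := by
  have hL : ∀ a, (fun y => g a y • v a)
      = (ContinuousLinearMap.toSpanSingleton ℝ (v a)) ∘ (g a) := by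
    intro a; ext y; simp
  have hm : ∀ a, ContDiff ℝ m (g a) := fun a => (hg a).of_le (by exact_mod_cast le_top)
  have hsm : ∀ a, ContDiff ℝ m (fun y => g a y • v a) := fun a => (hm a).smul contDiff_const
  have e : iteratedFDeriv ℝ m (fun y => ∑ a, g a y • v a) y
      = ∑ a, iteratedFDeriv ℝ m (fun y => g a y • v a) y := by
    have := iteratedFDeriv_fun_sum_apply (𝕜 := ℝ) (u := Finset.univ) (n := m) (x := y)
      (f := fun a y => g a y • v a)
      (fun a _ => (hsm a).contDiffAt)
    exact this
  rw [e]
  refine (norm_sum_le _ _).trans (Finset.sum_le_sum fun a _ => ?_)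
  rw [hL]
  refine (ContinuousLinearMap.norm_iteratedFDeriv_comp_left _ (hm a).contDiffAt le_rfl).trans ?_
  refine mul_le_mul_of_nonneg_right ?_ (norm_nonneg _)
  simp

/-- Bound on the `m`-th derivative. -/
def DB {E : Type*} [NormedAddCommGroup E] [NormedSpace ℝ E] (m : ℕ) (q : ℝ) (f : En n → E) : Prop :=
  ∃ C : ℝ, 0 ≤ C ∧ ∀ y, ‖iteratedFDeriv ℝ m f y‖ ≤ C * tau y ^ q

theorem DB.sum {κ E : Type*} [Fintype κ] [NormedAddCommGroup E] [NormedSpace ℝ E]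
    {g : κ → En n → ℝ} (hg : ∀ a, Sm (g a)) (v : κ → E) {m : ℕ} {q : ℝ} (h : ∀ a, DB m q (g a)) :
    DB m q (fun y => ∑ a, g a y • v a) := by
  choose C h0 hC using h
  refine ⟨∑ a, ‖v a‖ * C a, Finset.sum_nonneg fun a _ => mul_nonneg (norm_nonneg _) (h0 a), fun y => ?_⟩
  refine (norm_iter_sum hg v m y).trans ?_
  rw [Finset.sum_mul]
  refine Finset.sum_le_sum fun a _ => ?_
  rw [mul_assoc]
  exact mul_le_mul_of_nonneg_left (hC a y) (norm_nonneg _)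

theorem SymK.db (m : ℕ) : ∀ {k : ℕ} {p : ℝ} {f : En n → ℝ}, m ≤ k → Sm f → SymK k p f →
    DB m (p - m / 2) f := by
  induction m with
  | zero =>
    intro k p f _ _ h
    obtain ⟨C, h0, hC⟩ := h.bd.nn
    refine ⟨C, h0, fun y => ?_⟩
    simpa using hC y
  | succ m ih =>
    intro k p f hk sf h
    obtain ⟨k, rfl⟩ : ∃ l, k = l + 1 := ⟨k - 1, by omega⟩
    have e : fderiv ℝ f = fun y => ∑ i, pder i f y • (EuclideanSpace.proj i : En n →L[ℝ] ℝ) := by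
      ext y x
      rw [fderiv_eq_sum]
      simp [mul_comm]
    have := DB.sum (fun i => sf.pder i) (fun i => (EuclideanSpace.proj i : En n →L[ℝ] ℝ))
      (fun i => ih (by omega) (sf.pder i) (h.2 i))
    rw [← e] at this
    obtain ⟨C, h0, hC⟩ := this
    refine ⟨C, h0, fun y => ?_⟩
    rw [← norm_iteratedFDeriv_fderiv]
    refine (hC y).trans (le_of_eq ?_)
    congr 2; push_cast; ring

theorem DB.vec {ξ : En n → Fin n → Mat n} (hs : ContDiff ℝ (⊤ : ℕ∞) ξ) {m : ℕ} {q : ℝ}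
    (h : ∀ j μ ν, DB m q (fun y => ξ y j μ ν)) : DB m q ξ := by
  have := DB.sum (κ := Fin n × Fin n × Fin n) (g := fun a y => ξ y a.1 a.2.1 a.2.2)
    (fun a => comp_sm hs _ _ _)
    (fun a => (Pi.single a.1 (Pi.single a.2.1 (Pi.single a.2.2 (1 : ℝ))) : Fin n → Mat n))
    (fun a => h _ _ _)
  have e : ξ = fun y => ∑ a : Fin n × Fin n × Fin n, ξ y a.1 a.2.1 a.2.2 •
      (Pi.single a.1 (Pi.single a.2.1 (Pi.single a.2.2 (1 : ℝ))) : Fin n → Mat n) := by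
    ext y j μ ν
    simp only [Finset.sum_apply, Pi.smul_apply, Fintype.sum_prod_type, smul_eq_mul]
    rw [Finset.sum_eq_single j, Finset.sum_eq_single μ, Finset.sum_eq_single ν]
    · simp
    · intro b _ hb; simp [hb.symm]
    · simp
    · intro b _ hb; simp [Pi.single_eq_of_ne' hb]
    · simp
    · intro b _ hb; simp [Pi.single_eq_of_ne' hb]
    · simp
  rwa [← e] at this

theorem ratio {s t A : ℝ} (hs : 0 < s) (ht : 0 < t) (hA : 1 ≤ A) (h1 : s ≤ A * t) (h2 : t ≤ A * s)
    (q : ℝ) : s ^ q ≤ A ^ |q| * t ^ q := by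
  have hA0 : 0 < A := by linarith
  rcases le_or_gt 0 q with hq | hq
  · rw [abs_of_nonneg hq, ← Real.mul_rpow hA0.le ht.le]
    exact Real.rpow_le_rpow hs.le h1 hq
  · have : t / A ≤ s := by rw [div_le_iff₀ hA0]; linarith
    refine (Real.rpow_le_rpow_of_nonpos (by positivity) this hq.le).trans (le_of_eq ?_)
    rw [abs_of_neg hq, Real.div_rpow ht.le hA0.le, Real.rpow_neg hA0.le, div_eq_inv_mul]

theorem tau_rt (y : En n) (q : ℝ) : tau y ^ q ≤ 2 ^ |q| * (max 1 ‖y‖) ^ (2 * q) := by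
  have h1 : 1 ≤ max 1 ‖y‖ := le_max_left _ _
  have h2 : ‖y‖ ≤ max 1 ‖y‖ := le_max_right _ _
  have hsq : max 1 ‖y‖ ^ 2 ≤ tau y := by
    unfold tau
    rcases max_cases 1 ‖y‖ with h | h <;> rw [h.1] <;> nlinarith [sq_nonneg ‖y‖]
  have h3 := pow_le_pow_left₀ (norm_nonneg y) h2 2
  have h4 : tau y ≤ 2 * max 1 ‖y‖ ^ 2 := by
    unfold tau; have := one_le_pow₀ (n := 2) h1; linarith
  have := ratio (tau_pos y) (show 0 < max 1 ‖y‖ ^ 2 by positivity) one_le_two h4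
    (by linarith [tau_pos y]) q
  refine this.trans (le_of_eq ?_)
  rw [Real.rpow_mul (by positivity)]
  norm_cast

theorem tau_near {x y : En n} (h : x ∈ Metric.ball y 1) (q : ℝ) :
    tau x ^ q ≤ 3 ^ |q| * tau y ^ q := by
  have h' : x ∈ Metric.closedBall y 1 := Metric.ball_subset_closedBall h
  have h'' : y ∈ Metric.closedBall x 1 := by
    rw [Metric.mem_closedBall, dist_comm]; exact h'
  exact ratio (tau_pos x) (tau_pos y) (by norm_num) (tau_ball h') (tau_ball h'') q

theorem DB.rt {E : Type*} [NormedAddCommGroup E] [NormedSpace ℝ E] {m : ℕ} {q q' : ℝ} {f : En n → E}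
    (h : DB m q f) (hq : 2 * q = q') :
    ∃ C : ℝ, 0 ≤ C ∧ ∀ y, ‖iteratedFDeriv ℝ m f y‖ ≤ C * (max 1 ‖y‖) ^ q' := by
  obtain ⟨C, h0, hC⟩ := h
  refine ⟨C * 2 ^ |q|, by positivity, fun y => (hC y).trans ?_⟩
  rw [mul_assoc, ← hq]
  exact mul_le_mul_of_nonneg_left (tau_rt y q) h0

theorem holder {E : Type*} [NormedAddCommGroup E] [NormedSpace ℝ E] {q α : ℝ} {f : En n → E}
    (hf : ContDiff ℝ (⊤ : ℕ∞) f) (h : DB 3 q f) (hα : 0 < α) (hα1 : α < 1) :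
    ∃ C : ℝ, 0 ≤ C ∧ ∀ y, ∀ z ∈ Metric.ball y 1, ∀ w ∈ Metric.ball y 1,
      ‖iteratedFDeriv ℝ 2 f z - iteratedFDeriv ℝ 2 f w‖
          ≤ C * (max 1 ‖y‖) ^ (2 * q + 1 - α) * ‖z - w‖ ^ α := by
  obtain ⟨C, h0, hC⟩ := h
  refine ⟨C * (3 ^ |q| * 2 ^ |q|) * 2, by positivity, fun y z hz w hw => ?_⟩
  have h1 : 1 ≤ max 1 ‖y‖ := le_max_left _ _
  have hd : Differentiable ℝ (iteratedFDeriv ℝ 2 f) :=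
    hf.differentiable_iteratedFDeriv (m := 2) (WithTop.coe_lt_coe.2 (ENat.coe_lt_top 2))
  have hb : ∀ x ∈ Metric.ball y 1, ‖fderiv ℝ (iteratedFDeriv ℝ 2 f) x‖
      ≤ C * (3 ^ |q| * 2 ^ |q|) * max 1 ‖y‖ ^ (2 * q) := by
    intro x hx
    rw [norm_fderiv_iteratedFDeriv]
    refine (hC x).trans ?_
    rw [mul_assoc, mul_assoc]
    refine mul_le_mul_of_nonneg_left ((tau_near hx q).trans ?_) h0
    exact mul_le_mul_of_nonneg_left (tau_rt y q) (by positivity)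
  have hmv := (convex_ball y 1).norm_image_sub_le_of_norm_fderiv_le
    (fun x _ => hd x) hb hw hz
  refine hmv.trans ?_
  have hzw : ‖z - w‖ ≤ 2 := by
    rw [← dist_eq_norm]
    rw [Metric.mem_ball] at hz hw
    have := dist_triangle_right z w y
    linarith
  have a1 : ‖z - w‖ ≤ 2 * ‖z - w‖ ^ α := by
    have e : ‖z - w‖ = ‖z - w‖ ^ (1 - α) * ‖z - w‖ ^ α := by
      rw [← Real.rpow_add' (norm_nonneg _) (by simp)]; simp
    have b : ‖z - w‖ ^ (1 - α) ≤ 2 := by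
      refine (Real.rpow_le_rpow (norm_nonneg _) hzw (by linarith)).trans ?_
      conv_rhs => rw [← Real.rpow_one 2]
      exact Real.rpow_le_rpow_of_exponent_le one_le_two (by linarith)
    conv_lhs => rw [e]
    exact mul_le_mul_of_nonneg_right b (by positivity)
  have a2 : max 1 ‖y‖ ^ (2 * q) ≤ max 1 ‖y‖ ^ (2 * q + 1 - α) :=
    Real.rpow_le_rpow_of_exponent_le h1 (by linarith)
  calc C * (3 ^ |q| * 2 ^ |q|) * max 1 ‖y‖ ^ (2 * q) * ‖z - w‖
      ≤ C * (3 ^ |q| * 2 ^ |q|) * max 1 ‖y‖ ^ (2 * q + 1 - α) * (2 * ‖z - w‖ ^ α) := by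
        gcongr
    _ = _ := by ring

open MeasureTheory in
theorem main (n : ℕ) (hn : 5 ≤ n) (hn' : n ≤ 9)
    (lam : ℝ) (ξ : En n → Fin n → Mat n)
    (hs : ContDiff ℝ (⊤ : ℕ∞) ξ)
    (heig : ∀ (y : En n) (j : Fin n), Lop ξ y j = (-lam) • ξ y j)
    (hint : Integrable (fun y : En n =>
      (tnormSq (ξ y) +
        ∑ i, ∑ j, fipE (pderM i (fun z => ξ z j) y) (pderM i (fun z => ξ z j) y)) * gauss y))
    (α : ℝ) (hα : 0 < α) (hα1 : α < 1) :
    ∃ C : ℝ, ∀ y : En n,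
      Real.sqrt (tnormSq (ξ y)) ≤ C * (max 1 ‖y‖) ^ (2 * lam - 1) ∧
      ‖iteratedFDeriv ℝ 1 ξ y‖ ≤ C * (max 1 ‖y‖) ^ (2 * lam - 2) ∧
      ‖iteratedFDeriv ℝ 2 ξ y‖ ≤ C * (max 1 ‖y‖) ^ (2 * lam - 3) ∧
      ∀ z ∈ Metric.ball y 1, ∀ w ∈ Metric.ball y 1,
        ‖iteratedFDeriv ℝ 2 ξ z - iteratedFDeriv ℝ 2 ξ w‖
          ≤ C * (max 1 ‖y‖) ^ (2 * lam - 3 - α) * ‖z - w‖ ^ α := by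
  have hsym := eig_sym hn hn' 3 lam ξ hs heig hint
  have hdb : ∀ m : ℕ, m ≤ 3 → DB m (lam - 1 / 2 - m / 2) ξ := fun m hm =>
    DB.vec hs fun j μ ν => SymK.db m hm (comp_sm hs j μ ν) (hsym j μ ν)
  obtain ⟨K, hK, hK'⟩ := fq_bound (c := lam - 1 / 2)
    (u := fun a : Fin n × Fin n × Fin n => fun y => ξ y a.1 a.2.1 a.2.2)
    (fun a => (hsym _ _ _).bd)
  obtain ⟨C1, c1, hC1⟩ := (hdb 1 (by norm_num)).rt (q' := 2 * lam - 2) (by push_cast; ring)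
  obtain ⟨C2, c2, hC2⟩ := (hdb 2 (by norm_num)).rt (q' := 2 * lam - 3) (by push_cast; ring)
  obtain ⟨C3, c3, hC3⟩ := holder hs (hdb 3 le_rfl) hα hα1
  have e3 : 2 * (lam - 1 / 2 - ((3 : ℕ) : ℝ) / 2) + 1 - α = 2 * lam - 3 - α := by push_cast; ring
  rw [e3] at hC3
  set C0 := √K * 2 ^ |lam - 1 / 2| with hC0
  have c0 : 0 ≤ C0 := by positivity
  refine ⟨C0 + C1 + C2 + C3, fun y => ?_⟩
  have h1 : 0 < max 1 ‖y‖ := lt_of_lt_of_le one_pos (le_max_left _ _)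
  have hr : ∀ q : ℝ, 0 ≤ max 1 ‖y‖ ^ q := fun q => Real.rpow_nonneg h1.le q
  refine ⟨?_, (hC1 y).trans ?_, (hC2 y).trans ?_, fun z hz w hw => (hC3 y z hz w hw).trans ?_⟩
  · have a1 : √(tnormSq (ξ y)) ≤ C0 * max 1 ‖y‖ ^ (2 * lam - 1) := by
      rw [tnormSq_eq]
      refine (Real.sqrt_le_sqrt (hK' y)).trans ?_
      rw [Real.sqrt_mul hK]
      have : √(tau y ^ (2 * (lam - 1 / 2))) = tau y ^ (lam - 1 / 2) := by
        rw [Real.sqrt_eq_iff_mul_self_eq (taup_pos _ y).le (taup_pos _ y).le,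
          ← Real.rpow_add (tau_pos y)]
        congr 1; ring
      rw [this, hC0, mul_assoc]
      refine mul_le_mul_of_nonneg_left ((tau_rt y _).trans (le_of_eq ?_)) (Real.sqrt_nonneg _)
      congr 2; ring
    exact a1.trans (mul_le_mul_of_nonneg_right (by linarith) (hr _))
  · exact mul_le_mul_of_nonneg_right (by linarith) (hr _)
  · exact mul_le_mul_of_nonneg_right (by linarith) (hr _)
  · refine mul_le_mul_of_nonneg_right (mul_le_mul_of_nonneg_right (by linarith) (hr _)) ?_
    exact Real.rpow_nonneg (norm_nonneg _) _

end final
end EW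

open MeasureTheory in
/-- Weighted `C²` bound for eigenfunctions of the linearized operator: if `ξ` is smooth,
skew-valued, satisfies `−Lξ = λξ` pointwise and lies in the Gaussian-weighted `H¹` space, then
for every `α ∈ (0,1)` there is a constant `C` such that, with `r̃(y) = max(1,|y|)`:
`‖ξ(y)‖_F ≤ C·r̃^{2λ−1}`, `‖∇ξ(y)‖ ≤ C·r̃^{2λ−2}`, `‖∇²ξ(y)‖ ≤ C·r̃^{2λ−3}`, and the `α`-Hölder
seminorm of `∇²ξ` on the unit ball around `y` is at most `C·r̃^{2λ−3−α}`. -/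
theorem eigenfunction_weighted_C2_bound (n : ℕ) (hn : 5 ≤ n) (hn' : n ≤ 9)
    (lam : ℝ) (ξ : En n → Fin n → Mat n)
    (hs : ContDiff ℝ (⊤ : ℕ∞) ξ) (hskew : ∀ y j, skewM (ξ y j))
    (heig : ∀ (y : En n) (j : Fin n), Lop ξ y j = (-lam) • ξ y j)
    (hint : Integrable (fun y : En n =>
      (tnormSq (ξ y) +
        ∑ i, ∑ j, fipE (pderM i (fun z => ξ z j) y) (pderM i (fun z => ξ z j) y)) * gauss y))
    (α : ℝ) (hα : 0 < α) (hα1 : α < 1) :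
    ∃ C : ℝ, ∀ y : En n,
      Real.sqrt (tnormSq (ξ y)) ≤ C * (max 1 ‖y‖) ^ (2 * lam - 1) ∧
      ‖iteratedFDeriv ℝ 1 ξ y‖ ≤ C * (max 1 ‖y‖) ^ (2 * lam - 2) ∧
      ‖iteratedFDeriv ℝ 2 ξ y‖ ≤ C * (max 1 ‖y‖) ^ (2 * lam - 3) ∧
      ∀ z ∈ Metric.ball y 1, ∀ w ∈ Metric.ball y 1,
        ‖iteratedFDeriv ℝ 2 ξ z - iteratedFDeriv ℝ 2 ξ w‖
          ≤ C * (max 1 ‖y‖) ^ (2 * lam - 3 - α) * ‖z - w‖ ^ α := by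
  exact EW.main n hn hn' lam ξ hs heig hint α hα hα1
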